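/- arXiv:2311.08044 — 3 statements merged into one kernel-verified Lean document; each statement's English description precedes it below -/
import Mathlib

section
/- Suppose the triangulated category T is bi-complete (has arbitrary coproducts and products) and (F, ω) : T → T is a bi-continuous triangle endofunctor (preserving arbitrary coproducts and products). Assume the pre-weight structure (U≥0, U≤0) on T is two-sided convergent, its core C satisfies Hom_T(A, Σ^{−k}(B)) = 0 for all A, B ∈ C and all k ≥ 1, and there are isomorphisms η_A : F(A) → A for all A ∈ C natural in A ∈ C. Then F(X) is isomorphic to X for every object X of T. -/
/-!
The isomorphisms `η` on the core `C` induce natural isomorphisms `zeta : F Z ≅ Z` on every shift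
`Σ^k(C)`, compatible with suspension.

For `X ∈ U≤0` with convergent left tower `(Xₙ)`, isomorphisms `θₙ : F Xₙ ≅ Xₙ` are built inductively
from the triangles `Xₙ ⟶ Xₙ₊₁ ⟶ Zₙ ⟶ Xₙ⟦1⟧`, `Zₙ ∈ Σ^{n+1}(C)`. The connecting morphism is compatible
with `zeta` and `θₙ` because, as `Hom(C, Σ^{-k}(C)) = 0` for `k ≥ 1`, morphisms `Zₙ ⟶ Xₙ⟦1⟧` are
detected on the topmost layer of `Xₙ`, where `zeta` is natural (`LeftGood`, `left_step`). Since `F`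
preserves countable coproducts, the `θₙ` pass to the hocolim and give `F X ≅ X` (`left_exists`).
Right towers are treated dually (`right_step`, `right_exists`).

An arbitrary `Z` is the cone of a morphism `q : X ⟶ Y` with `X ∈ U≤0` and `Y ∈ U≥0`. Convergence and
the vanishing on the core give `Hom(U≤0, U≥1) = 0` (`orthogonal`), so `q` is determined by the
composition `X₀ ⟶ X ⟶ Y ⟶ Y₀` in `C`; hence the isomorphisms of `X` and `Y` commute with `q`
(`compat`) and extend to the cone.
-/

open CategoryTheory Category Limits Pretriangulated ZeroObject

universe v u

variable {T : Type u} [Category.{v} T] [HasZeroObject T] [HasShift T ℤ] [Preadditive T]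
  [∀ n : ℤ, (CategoryTheory.shiftFunctor T n).Additive] [Pretriangulated T]

/-- `Z ∈ star X Y` iff there is a distinguished triangle `A → Z → B → A⟦1⟧`
with `A ∈ X` and `B ∈ Y`. -/
def star (X Y : Set T) : Set T :=
  {Z | ∃ (A B : T) (f : A ⟶ Z) (g : Z ⟶ B) (h : B ⟶ A⟦(1:ℤ)⟧),
    A ∈ X ∧ B ∈ Y ∧ Triangle.mk f g h ∈ distTriang T}

/-- The cone of `f` lies in `S`. -/
def coneIn {A B : T} (f : A ⟶ B) (S : Set T) : Prop :=
  ∃ (Z : T) (g : B ⟶ Z) (h : Z ⟶ A⟦(1:ℤ)⟧),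
    Triangle.mk f g h ∈ (distTriang T) ∧ Z ∈ S

/-- `U≥m = Σ^{-m}(U≥0)`. -/
def geM (ge : Set T) (m : ℤ) : Set T := {X | X⟦m⟧ ∈ ge}

/-- `U≤m = Σ^{-m}(U≤0)`. -/
def leM (le : Set T) (m : ℤ) : Set T := {X | X⟦m⟧ ∈ le}

/-- `U[m,n] = U≥m ∩ U≤n`. -/
def interval (ge le : Set T) (m n : ℤ) : Set T := geM ge m ∩ leM le n

/-- The core `C = U≥0 ∩ U≤0`. -/
def coreSet (ge le : Set T) : Set T := ge ∩ le

/-- `Σ^{-k}(C)`. -/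
def coreShift (ge le : Set T) (k : ℤ) : Set T := {X | X⟦k⟧ ∈ coreSet ge le}

/-- `U₊ = ⋂ₘ U≥m`. -/
def plusSet (ge : Set T) : Set T := {X | ∀ m : ℤ, X ∈ geM ge m}

/-- `U₋ = ⋂ₘ U≤m`. -/
def minusSet (le : Set T) : Set T := {X | ∀ m : ℤ, X ∈ leM le m}

/-- `U_b = ⋃_{m ≤ n} U[m,n]`. -/
def boundedSet (ge le : Set T) : Set T :=
  {X | ∃ m n : ℤ, m ≤ n ∧ X ∈ interval ge le m n}

/-- A pre-weight structure: a pair of full additive subcategories (given by their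
classes of objects, closed under isomorphisms, containing the zero objects and closed
under finite biproducts) with `U≥0 ∗ Σ(U≤0) = T`, `U≥0` closed under `Σ⁻¹` and
extensions, and `U≤0` closed under `Σ` and extensions. -/
structure IsPreWeightStructure (ge le : Set T) : Prop where
  ge_iso : ∀ ⦃X Y : T⦄, (X ≅ Y) → X ∈ ge → Y ∈ ge
  le_iso : ∀ ⦃X Y : T⦄, (X ≅ Y) → X ∈ le → Y ∈ le
  ge_zero : ∀ Z : T, IsZero Z → Z ∈ ge
  le_zero : ∀ Z : T, IsZero Z → Z ∈ le
  ge_biprod : ∀ ⦃X Y : T⦄ (b : BinaryBicone X Y), b.IsBilimit → X ∈ ge → Y ∈ ge → b.pt ∈ ge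
  le_biprod : ∀ ⦃X Y : T⦄ (b : BinaryBicone X Y), b.IsBilimit → X ∈ le → Y ∈ le → b.pt ∈ le
  decomp : ∀ Z : T, Z ∈ star ge (leM le (-1))
  ge_shiftNeg : ∀ X ∈ ge, X⟦(-1:ℤ)⟧ ∈ ge
  ge_ext : star ge ge ⊆ ge
  le_shiftPos : ∀ X ∈ le, X⟦(1:ℤ)⟧ ∈ le
  le_ext : star le le ⊆ le

/-- A left tower of `X ∈ U≤0` (Proposition 2.7(1)). -/
structure LeftTower (ge le : Set T) (X : T) where
  obj : ℕ → T
  ι : ∀ n : ℕ, obj n ⟶ X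
  φ : ∀ n : ℕ, obj n ⟶ obj (n + 1)
  mem : ∀ n : ℕ, obj n ∈ interval ge le (-(n : ℤ)) 0
  cone_ι : ∀ n : ℕ, coneIn (ι n) (leM le (-(n : ℤ) - 1))
  cone_φ : ∀ n : ℕ, coneIn (φ n) (coreShift ge le (-((n : ℤ) + 1)))
  comm : ∀ n : ℕ, ι n = φ n ≫ ι (n + 1)

/-- A right tower of `Y ∈ U≥0` (Proposition 2.7(2)). -/
structure RightTower (ge le : Set T) (Y : T) where
  obj : ℕ → T
  π : ∀ n : ℕ, Y ⟶ obj n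
  ψ : ∀ n : ℕ, obj (n + 1) ⟶ obj n
  mem : ∀ n : ℕ, obj n ∈ interval ge le 0 (n : ℤ)
  cone_π : ∀ n : ℕ, coneIn (π n) (geM ge (n : ℤ))
  cone_ψ : ∀ n : ℕ, coneIn (ψ n) (coreShift ge le (n : ℤ))
  comm : ∀ n : ℕ, π n = π (n + 1) ≫ ψ n

section

variable [HasColimitsOfShape (Discrete ℕ) T] [HasLimitsOfShape (Discrete ℕ) T]

/-- The morphism `1 - φ : ∐ Xₙ ⟶ ∐ Xₙ` of a left tower. -/
noncomputable def LeftTower.oneSubPhi {ge le : Set T} {X : T} (tw : LeftTower ge le X) :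
    (∐ tw.obj) ⟶ (∐ tw.obj) :=
  Sigma.desc fun n => Sigma.ι tw.obj n - tw.φ n ≫ Sigma.ι tw.obj (n + 1)

/-- A left tower is convergent if, completing `1 - φ` to an exact triangle
`∐ Xₙ → ∐ Xₙ →^γ hocolim Xₙ → Σ(∐ Xₙ)`, there is an isomorphism
`κ : hocolim Xₙ ≅ X` with `κ ∘ γ ∘ incₙ = ιₙ` for all `n`. -/
def LeftTower.Convergent {ge le : Set T} {X : T} (tw : LeftTower ge le X) : Prop :=
  ∃ (H : T) (γ : (∐ tw.obj) ⟶ H) (δ : H ⟶ (∐ tw.obj)⟦(1:ℤ)⟧),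
    Triangle.mk tw.oneSubPhi γ δ ∈ (distTriang T) ∧
    ∃ κ : H ≅ X, ∀ n : ℕ, Sigma.ι tw.obj n ≫ γ ≫ κ.hom = tw.ι n

/-- The morphism `1 - ψ : ∏ Yₙ ⟶ ∏ Yₙ` of a right tower. -/
noncomputable def RightTower.oneSubPsi {ge le : Set T} {Y : T} (tw : RightTower ge le Y) :
    (∏ᶜ tw.obj) ⟶ (∏ᶜ tw.obj) :=
  Pi.lift fun n => Pi.π tw.obj n - Pi.π tw.obj (n + 1) ≫ tw.ψ n

/-- A right tower is convergent if, completing `1 - ψ` to an exact triangle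
`holim Yₙ →^σ ∏ Yₙ → ∏ Yₙ → Σ(holim Yₙ)`, there is an isomorphism
`λ : Y ≅ holim Yₙ` with `prₙ ∘ σ ∘ λ = πₙ` for all `n`. -/
def RightTower.Convergent {ge le : Set T} {Y : T} (tw : RightTower ge le Y) : Prop :=
  ∃ (H : T) (σ : H ⟶ ∏ᶜ tw.obj) (δ : (∏ᶜ tw.obj) ⟶ H⟦(1:ℤ)⟧),
    Triangle.mk σ tw.oneSubPsi δ ∈ (distTriang T) ∧
    ∃ lam : Y ≅ H, ∀ n : ℕ, lam.hom ≫ σ ≫ Pi.π tw.obj n = tw.π n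

/-- The pre-weight structure is left convergent. -/
def LeftConvergent (ge le : Set T) : Prop :=
  ∀ X : T, X ∈ le → ∃ tw : LeftTower ge le X, tw.Convergent

/-- The pre-weight structure is right convergent. -/
def RightConvergent (ge le : Set T) : Prop :=
  ∀ Y : T, Y ∈ ge → ∃ tw : RightTower ge le Y, tw.Convergent

/-- The pre-weight structure is two-sided convergent. -/
def TwoSidedConvergent (ge le : Set T) : Prop :=
  LeftConvergent ge le ∧ RightConvergent ge le

end

namespace PreWeight

set_option linter.unusedSectionVars false

/-! ### Preliminaries on shifts and the core -/

section Helpers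

variable {ge le : Set T}

/-- Dependent choice along `ℕ`, starting at a prescribed element. -/
theorem exists_seq {α : ℕ → Type*} {P : ∀ n, α n → Prop} {R : ∀ n, α n → α (n + 1) → Prop}
    (a : α 0) (h0 : P 0 a) (step : ∀ n x, P n x → ∃ y, P (n + 1) y ∧ R n x y) :
    ∃ s : ∀ n, α n, s 0 = a ∧ ∀ n, R n (s n) (s (n + 1)) := by
  choose y hy using step
  let t : ∀ n, { x : α n // P n x } := fun n =>
    Nat.rec ⟨a, h0⟩ (fun n x => ⟨y n x.1 x.2, (hy n x.1 x.2).1⟩) n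
  exact ⟨fun n => (t n).1, rfl, fun n => (hy n (t n).1 (t n).2).2⟩

theorem core_iso (W : IsPreWeightStructure ge le) {X Y : T} (e : X ≅ Y)
    (h : X ∈ coreSet ge le) : Y ∈ coreSet ge le :=
  ⟨W.ge_iso e h.1, W.le_iso e h.2⟩

theorem coreShift_shift (W : IsPreWeightStructure ge le) {Z : T} {a b c : ℤ} (h : a + b = c)
    (hZ : Z ∈ coreShift ge le c) : Z⟦a⟧ ∈ coreShift ge le b :=
  core_iso W ((shiftFunctorAdd' T a b c h).app Z) hZ

theorem coreShift_zero (W : IsPreWeightStructure ge le) {Z : T} (hZ : Z ∈ coreShift ge le 0) :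
    Z ∈ coreSet ge le :=
  core_iso W ((shiftFunctorZero T ℤ).app Z) hZ

theorem coreShift_hom_zero
    (hC : ∀ A B : T, A ∈ coreSet ge le → B ∈ coreSet ge le →
      ∀ k : ℕ, 1 ≤ k → ∀ f : A ⟶ B⟦-(k : ℤ)⟧, f = 0)
    {A B : T} {a b : ℤ} (hA : A ∈ coreShift ge le a) (hB : B ∈ coreShift ge le b) (hab : a < b)
    (f : A ⟶ B) : f = 0 := by
  obtain ⟨k, hk⟩ : ∃ k : ℕ, b - a = k := ⟨(b - a).toNat, by omega⟩
  have h : f⟦a⟧' ≫ (shiftFunctorAdd' T b (-(k : ℤ)) a (by omega)).hom.app B = 0 :=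
    hC _ _ hA hB k (by omega) _
  rw [Preadditive.IsIso.comp_right_eq_zero] at h
  exact (shiftFunctor T a).map_injective (by rw [h, Functor.map_zero])

/-- If `e` detects morphisms `A⟦-1⟧ ⟶ X`, then `e⟦1⟧` detects morphisms `A ⟶ X⟦1⟧`. -/
theorem eq_zero_of_comp_shift {A X E : T} (e : X ⟶ E)
    (H : ∀ v : A⟦(-1 : ℤ)⟧ ⟶ X, v ≫ e = 0 → v = 0)
    (u : A ⟶ X⟦(1 : ℤ)⟧) (hu : u ≫ e⟦(1 : ℤ)⟧' = 0) : u = 0 := by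
  let i := (shiftFunctorCompIsoId T (-1 : ℤ) 1 (by omega)).app A
  obtain ⟨v, hv⟩ := (shiftFunctor T (1 : ℤ)).map_surjective (i.hom ≫ u)
  have h1 : v = 0 := H v ((shiftFunctor T (1 : ℤ)).map_injective (by
    rw [Functor.map_comp, hv, assoc, hu, comp_zero, Functor.map_zero]))
  rw [h1, Functor.map_zero] at hv
  rw [← cancel_epi i.hom, ← hv, comp_zero]

theorem shift_hom_zero {A X : T} (H : ∀ v : A ⟶ X⟦(-1 : ℤ)⟧, v = 0)
    (u : A⟦(1 : ℤ)⟧ ⟶ X) : u = 0 := by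
  let i := (shiftFunctorCompIsoId T (-1 : ℤ) 1 (by omega)).app X
  obtain ⟨v, hv⟩ := (shiftFunctor T (1 : ℤ)).map_surjective (u ≫ i.inv)
  rw [H v, Functor.map_zero] at hv
  rw [← cancel_mono i.inv, ← hv, zero_comp]

theorem hom_shift_neg_zero {A X : T} (H : ∀ v : A⟦(1 : ℤ)⟧ ⟶ X, v = 0)
    (u : A ⟶ X⟦(-1 : ℤ)⟧) : u = 0 := by
  let i := (shiftFunctorCompIsoId T (-1 : ℤ) 1 (by omega)).app X
  have h := H (u⟦(1 : ℤ)⟧' ≫ i.hom)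
  rw [Preadditive.IsIso.comp_right_eq_zero] at h
  exact (shiftFunctor T (1 : ℤ)).map_injective (by rw [h, Functor.map_zero])

/-- A distinguished triangle `A ⟶ B ⟶ Z ⟶ A⟦1⟧` rotates to `Z⟦-1⟧ ⟶ A ⟶ B ⟶ Z⟦-1⟧⟦1⟧`, whose middle
morphism is the given `f` without a sign. -/
theorem exists_invRotate {A B Z : T} {f : A ⟶ B} {g : B ⟶ Z} {h : Z ⟶ A⟦(1 : ℤ)⟧}
    (H : Triangle.mk f g h ∈ distTriang T) :
    ∃ (p : Z⟦(-1 : ℤ)⟧ ⟶ A) (q : B ⟶ (Z⟦(-1 : ℤ)⟧)⟦(1 : ℤ)⟧),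
      Triangle.mk p f q ∈ distTriang T :=
  ⟨_, _, inv_rot_of_distTriang _ H⟩

end Helpers

/-! ### Extending isomorphisms over triangles and shifts of the core -/

section Functor

variable {ge le : Set T} (F : T ⥤ T) [F.CommShift ℤ] [F.IsTriangulated]

theorem complete₂ {A B Z : T} {f : A ⟶ B} {g : B ⟶ Z} {h : Z ⟶ A⟦(1 : ℤ)⟧}
    (H : Triangle.mk f g h ∈ distTriang T) (a : F.obj A ≅ A) (c : F.obj Z ≅ Z)
    (comm : F.map h ≫ (F.commShiftIso (1 : ℤ)).hom.app A ≫ a.hom⟦(1 : ℤ)⟧' = c.hom ≫ h) :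
    ∃ b : F.obj B ≅ B, F.map f ≫ b.hom = a.hom ≫ f ∧ F.map g ≫ c.hom = b.hom ≫ g := by
  have comm' : (F.map h ≫ (F.commShiftIso (1 : ℤ)).hom.app A) ≫ a.hom⟦(1 : ℤ)⟧' =
      c.hom ≫ h := by
    rw [assoc, comm]
  obtain ⟨(b : F.obj B ⟶ B), h1, h2⟩ := complete_distinguished_triangle_morphism₂
    (F.mapTriangle.obj (Triangle.mk f g h)) _ (F.map_distinguished _ H) H a.hom c.hom
    comm'
  let m : F.mapTriangle.obj (Triangle.mk f g h) ⟶ Triangle.mk f g h :=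
    { hom₁ := a.hom, hom₂ := b, hom₃ := c.hom, comm₁ := h1, comm₂ := h2,
      comm₃ := comm' }
  have : IsIso b := isIso₂_of_isIso₁₃ m (F.map_distinguished _ H) H
    (inferInstanceAs (IsIso a.hom)) (inferInstanceAs (IsIso c.hom))
  exact ⟨asIso b, h1, h2⟩

theorem complete₃ {A B Z : T} {f : A ⟶ B} {g : B ⟶ Z} {h : Z ⟶ A⟦(1 : ℤ)⟧}
    (H : Triangle.mk f g h ∈ distTriang T) (a : F.obj A ≅ A) (b : F.obj B ≅ B)
    (comm : F.map f ≫ b.hom = a.hom ≫ f) :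
    ∃ c : F.obj Z ≅ Z, F.map g ≫ c.hom = b.hom ≫ g := by
  obtain ⟨(c : F.obj Z ⟶ Z), h1, h2⟩ := complete_distinguished_triangle_morphism
    (F.mapTriangle.obj (Triangle.mk f g h)) _ (F.map_distinguished _ H) H a.hom b.hom comm
  let m : F.mapTriangle.obj (Triangle.mk f g h) ⟶ Triangle.mk f g h :=
    { hom₁ := a.hom, hom₂ := b.hom, hom₃ := c, comm₁ := comm, comm₂ := h1, comm₃ := h2 }
  have : IsIso c := isIso₃_of_isIso₁₂ m (F.map_distinguished _ H) H
    (inferInstanceAs (IsIso a.hom)) (inferInstanceAs (IsIso b.hom))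
  exact ⟨asIso c, h1⟩

theorem complete₁ {A B Z : T} {f : A ⟶ B} {g : B ⟶ Z} {h : Z ⟶ A⟦(1 : ℤ)⟧}
    (H : Triangle.mk f g h ∈ distTriang T) (b : F.obj B ≅ B) (c : F.obj Z ≅ Z)
    (comm : F.map g ≫ c.hom = b.hom ≫ g) :
    ∃ a : F.obj A ≅ A, F.map f ≫ b.hom = a.hom ≫ f := by
  obtain ⟨(a : F.obj A ⟶ A), h1, h2⟩ := complete_distinguished_triangle_morphism₁
    (F.mapTriangle.obj (Triangle.mk f g h)) _ (F.map_distinguished _ H) H b.hom c.hom comm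
  let m : F.mapTriangle.obj (Triangle.mk f g h) ⟶ Triangle.mk f g h :=
    { hom₁ := a, hom₂ := b.hom, hom₃ := c.hom, comm₁ := h1, comm₂ := comm, comm₃ := h2 }
  have : IsIso a := isIso₁_of_isIso₂₃ m (F.map_distinguished _ H) H
    (inferInstanceAs (IsIso b.hom)) (inferInstanceAs (IsIso c.hom))
  exact ⟨asIso a, h1⟩

variable (η : ∀ (A : T), A ∈ coreSet ge le → (F.obj A ≅ A))

/-- The isomorphism `F Z ≅ Z` for `Z ∈ Σ^{-k}(C)` obtained from `η` at `Z⟦k⟧ ∈ C` by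
desuspending `k` times. -/
noncomputable def zeta (k : ℤ) (Z : T) (hZ : Z ∈ coreShift ge le k) : F.obj Z ≅ Z :=
  (shiftFunctor T k).preimageIso ((F.commShiftIso k).symm.app Z ≪≫ η _ hZ)

theorem shift_zeta (k : ℤ) (Z : T) (hZ : Z ∈ coreShift ge le k) :
    ((zeta F η k Z hZ).hom)⟦k⟧' = (F.commShiftIso k).inv.app Z ≫ (η _ hZ).hom := by
  simp [zeta]

theorem zeta_naturality (hη : ∀ (A B : T) (hA : A ∈ coreSet ge le) (hB : B ∈ coreSet ge le)
      (f : A ⟶ B), F.map f ≫ (η B hB).hom = (η A hA).hom ≫ f)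
    {k : ℤ} {A B : T} (hA : A ∈ coreShift ge le k) (hB : B ∈ coreShift ge le k) (f : A ⟶ B) :
    F.map f ≫ (zeta F η k B hB).hom = (zeta F η k A hA).hom ≫ f := by
  apply (shiftFunctor T k).map_injective
  have h := (F.commShiftIso k).inv.naturality f
  dsimp at h
  rw [Functor.map_comp, Functor.map_comp, shift_zeta, shift_zeta, assoc, ← hη _ _ hA hB,
    reassoc_of% h]

/-- `zeta` commutes with suspension, via the shift isomorphism of `F`. -/
theorem zeta_shift (W : IsPreWeightStructure ge le)
    (hη : ∀ (A B : T) (hA : A ∈ coreSet ge le) (hB : B ∈ coreSet ge le)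
      (f : A ⟶ B), F.map f ≫ (η B hB).hom = (η A hA).hom ≫ f)
    {a b : ℤ} {B : T} (hab : 1 + a = b) (hB : B ∈ coreShift ge le b) :
    (F.commShiftIso (1 : ℤ)).hom.app B ≫ (zeta F η b B hB).hom⟦(1 : ℤ)⟧' =
      (zeta F η a (B⟦(1 : ℤ)⟧) (coreShift_shift W hab hB)).hom := by
  apply (shiftFunctor T a).map_injective
  have h1 := (shiftFunctorAdd' T 1 a b hab).hom.naturality (zeta F η b B hB).hom
  have h2 := NatTrans.congr_app (congr_arg Iso.hom (F.commShiftIso_add' hab)) B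
  have h3 := hη _ _ hB (coreShift_shift W hab hB) ((shiftFunctorAdd' T 1 a b hab).hom.app B)
  dsimp at h1 h3
  simp only [Functor.CommShift.isoAdd'_hom_app] at h2
  rw [Functor.map_comp, shift_zeta,
    ← cancel_epi (F.map ((shiftFunctorAdd' T 1 a b hab).hom.app B) ≫
      (F.commShiftIso a).hom.app (B⟦(1 : ℤ)⟧))]
  simp only [assoc, Iso.hom_inv_id_app_assoc]
  have h4 : (η _ hB).hom ≫ (shiftFunctorAdd' T 1 a b hab).hom.app B =
      (F.commShiftIso b).hom.app B ≫ (shiftFunctorAdd' T 1 a b hab).hom.app (F.obj B) ≫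
        ((zeta F η b B hB).hom⟦(1 : ℤ)⟧')⟦a⟧' := by
    rw [← h1, shift_zeta, assoc, Iso.hom_inv_id_app_assoc]
  rw [h3, h4, h2]
  simp only [assoc, Iso.inv_hom_id_app_assoc]

theorem zeta_hom_shift (W : IsPreWeightStructure ge le)
    (hη : ∀ (A B : T) (hA : A ∈ coreSet ge le) (hB : B ∈ coreSet ge le)
      (f : A ⟶ B), F.map f ≫ (η B hB).hom = (η A hA).hom ≫ f)
    {a b : ℤ} {A B : T} (hab : 1 + a = b) (hA : A ∈ coreShift ge le a)
    (hB : B ∈ coreShift ge le b) (f : A ⟶ B⟦(1 : ℤ)⟧) :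
    F.map f ≫ (F.commShiftIso (1 : ℤ)).hom.app B ≫ (zeta F η b B hB).hom⟦(1 : ℤ)⟧' =
      (zeta F η a A hA).hom ≫ f := by
  rw [zeta_shift F η W hη hab, zeta_naturality F η hη]

end Functor

/-! ### Orthogonality of `U≤0` and `U≥1` -/

section Orthogonality

variable [HasColimitsOfShape (Discrete ℕ) T] [HasLimitsOfShape (Discrete ℕ) T]
variable {ge le : Set T}

theorem leftTower_zero {X : T} (tw : LeftTower ge le X) :
    tw.obj 0 ∈ coreShift ge le 0 := by
  have h := tw.mem 0
  simp only [Nat.cast_zero, neg_zero] at h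
  exact h

theorem rightTower_zero {Y : T} (tw : RightTower ge le Y) :
    tw.obj 0 ∈ coreShift ge le 0 := by
  have h := tw.mem 0
  simp only [Nat.cast_zero] at h
  exact h

theorem leftTower_hom_zero {X : T} (tw : LeftTower ge le X)
    {Y : T} (hY : ∀ (k : ℤ) (E : T), k ≤ 0 → E ∈ coreShift ge le k → ∀ u : E ⟶ Y, u = 0)
    (n : ℕ) (u : tw.obj n ⟶ Y) : u = 0 := by
  induction n with
  | zero => exact hY 0 _ le_rfl (leftTower_zero tw) u
  | succ n ih =>
    obtain ⟨Z, g, h, H, hZ⟩ := tw.cone_φ n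
    obtain ⟨v, hv⟩ : ∃ v : Z ⟶ Y, u = g ≫ v := Triangle.yoneda_exact₂ _ H u (ih _)
    rw [hv, hY _ _ (by omega) hZ v, comp_zero]

theorem rightTower_hom_zero (W : IsPreWeightStructure ge le) {Y : T} (tw : RightTower ge le Y)
    {A : T} (hA : ∀ (k : ℤ) (E : T), 0 ≤ k → E ∈ coreShift ge le k → ∀ u : A ⟶ E, u = 0)
    (n : ℕ) (u : A ⟶ tw.obj n) : u = 0 := by
  induction n with
  | zero => exact hA 0 _ le_rfl (rightTower_zero tw) u
  | succ n ih =>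
    obtain ⟨Z, g, h, H, hZ⟩ := tw.cone_ψ n
    obtain ⟨p, q, H'⟩ := exists_invRotate H
    obtain ⟨v, hv⟩ : ∃ v : A ⟶ Z⟦(-1 : ℤ)⟧, u = v ≫ p := Triangle.coyoneda_exact₂ _ H' u (ih _)
    have hZ' : Z⟦(-1 : ℤ)⟧ ∈ coreShift ge le (n + 1) := coreShift_shift W (by omega) hZ
    rw [hv, hA _ _ (by omega) hZ' v, zero_comp]

/-- If `Hom(Σ^k(C), Y) = 0` for all `k ≥ 0`, then `Hom(U≤0, Y) = 0`. The class of admissible `Y` is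
stable under `Σ⁻¹`, which kills the `Σ(∐ Xₙ)` term of the hocolim triangle as well. -/
theorem le_hom_zero (W : IsPreWeightStructure ge le) (hconv : LeftConvergent ge le)
    {X : T} (hX : X ∈ le) {Y : T}
    (hY : ∀ (k : ℤ) (E : T), k ≤ 0 → E ∈ coreShift ge le k → ∀ u : E ⟶ Y, u = 0)
    (u : X ⟶ Y) : u = 0 := by
  obtain ⟨tw, H, γ, δ, hT, κ, -⟩ := hconv X hX
  have hY' : ∀ (k : ℤ) (E : T), k ≤ 0 → E ∈ coreShift ge le k →
      ∀ u : E ⟶ Y⟦(-1 : ℤ)⟧, u = 0 := fun k E hk hE =>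
    hom_shift_neg_zero (hY (k - 1) _ (by omega) (coreShift_shift W (by omega) hE))
  have h1 : γ ≫ κ.hom ≫ u = 0 :=
    Sigma.hom_ext _ _ fun n => by
      rw [comp_zero]; exact leftTower_hom_zero tw hY n _
  obtain ⟨v, hv⟩ : ∃ v : (∐ tw.obj)⟦(1 : ℤ)⟧ ⟶ Y, κ.hom ≫ u = δ ≫ v :=
    Triangle.yoneda_exact₃ _ hT _ h1
  have hv0 : v = 0 := shift_hom_zero (fun w => Sigma.hom_ext _ _ fun n => by
    rw [comp_zero]; exact leftTower_hom_zero tw hY' n _) v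
  rw [← cancel_epi κ.hom, hv, hv0, comp_zero, comp_zero]

/-- Dual of `le_hom_zero`. -/
theorem hom_ge_zero (W : IsPreWeightStructure ge le) (hconv : RightConvergent ge le)
    {Y : T} (hY : Y ∈ ge) {A : T}
    (hA : ∀ (k : ℤ) (E : T), 0 ≤ k → E ∈ coreShift ge le k → ∀ u : A ⟶ E, u = 0)
    (u : A ⟶ Y) : u = 0 := by
  obtain ⟨tw, H, σ, δ, hT, lam, -⟩ := hconv Y hY
  have hA' : ∀ (k : ℤ) (E : T), 0 ≤ k → E ∈ coreShift ge le k →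
      ∀ u : A⟦(1 : ℤ)⟧ ⟶ E, u = 0 := fun k E hk hE =>
    shift_hom_zero (hA (k + 1) _ (by omega) (coreShift_shift W (by omega) hE))
  have h1 : (u ≫ lam.hom) ≫ σ = 0 :=
    Pi.hom_ext _ _ fun n => by
      rw [zero_comp]; exact rightTower_hom_zero W tw hA n _
  obtain ⟨p, q, hT'⟩ := exists_invRotate hT
  obtain ⟨v, hv⟩ : ∃ v : A ⟶ (∏ᶜ tw.obj)⟦(-1 : ℤ)⟧, u ≫ lam.hom = v ≫ p :=
    Triangle.coyoneda_exact₂ _ hT' _ h1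
  have hv0 : v = 0 := hom_shift_neg_zero (fun w => Pi.hom_ext _ _ fun n => by
    rw [zero_comp]; exact rightTower_hom_zero W tw hA' n _) v
  rw [← cancel_mono lam.hom, hv, hv0, zero_comp, zero_comp]

/-- `Hom(U≤0, U≥1) = 0`, where objects of `U≥1` are written `Y⟦-1⟧` with `Y ∈ U≥0`. -/
theorem orthogonal (W : IsPreWeightStructure ge le) (hconv : TwoSidedConvergent ge le)
    (hC : ∀ A B : T, A ∈ coreSet ge le → B ∈ coreSet ge le →
      ∀ k : ℕ, 1 ≤ k → ∀ f : A ⟶ B⟦-(k : ℤ)⟧, f = 0)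
    {X Y : T} (hX : X ∈ le) (hY : Y ∈ ge) (u : X ⟶ Y⟦(-1 : ℤ)⟧) : u = 0 :=
  le_hom_zero W hconv.1 hX (fun k E hk hE => hom_shift_neg_zero
    (hom_ge_zero W hconv.2 hY (fun l E' hl hE' =>
      coreShift_hom_zero hC (coreShift_shift W (b := k - 1) (by omega) hE) hE' (by omega)))) u

end Orthogonality

/-! ### Comparison isomorphisms along towers -/

section Comparison

variable {ge le : Set T} (F : T ⥤ T) [F.CommShift ℤ] [F.IsTriangulated]
variable (η : ∀ (A : T), A ∈ coreSet ge le → (F.obj A ≅ A))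

/-- The invariant carried along a left tower, for an isomorphism `θ : F X ≅ X` where `X` plays the
role of the `n`-th stage: there is a morphism `e : X ⟶ E` to the topmost layer `E ∈ Σ^n(C)` that
intertwines `θ` with `zeta` and detects morphisms from `Σ^n(C)`, and `Hom(Σ^k(C), X) = 0` for
`k > n`. -/
structure LeftGood (n : ℤ) (X : T) (θ : F.obj X ≅ X) : Prop where
  detect : ∃ (E : T) (hE : E ∈ coreShift ge le (-n)) (e : X ⟶ E),
    F.map e ≫ (zeta F η (-n) E hE).hom = θ.hom ≫ e ∧
    ∀ A ∈ coreShift ge le (-n), ∀ u : A ⟶ X, u ≫ e = 0 → u = 0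
  vanish : ∀ k < -n, ∀ A ∈ coreShift ge le k, ∀ u : A ⟶ X, u = 0

/-- The dual invariant for right towers: `e : E ⟶ Y` comes from the layer `E ∈ Σ^{-n}(C)` and
detects morphisms to `Σ^{-n}(C)`. -/
structure RightGood (n : ℤ) (Y : T) (θ : F.obj Y ≅ Y) : Prop where
  detect : ∃ (E : T) (hE : E ∈ coreShift ge le n) (e : E ⟶ Y),
    F.map e ≫ θ.hom = (zeta F η n E hE).hom ≫ e ∧
    ∀ A ∈ coreShift ge le n, ∀ u : Y ⟶ A, e ≫ u = 0 → u = 0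
  vanish : ∀ k > n, ∀ A ∈ coreShift ge le k, ∀ u : Y ⟶ A, u = 0

/-- One step of a left tower. The connecting morphism `h : Z ⟶ X⟦1⟧` is compatible with the
isomorphisms because this can be tested after composing with `e⟦1⟧`, where it is the naturality of
`zeta`. -/
theorem left_step
    (W : IsPreWeightStructure ge le)
    (hC : ∀ A B : T, A ∈ coreSet ge le → B ∈ coreSet ge le →
      ∀ k : ℕ, 1 ≤ k → ∀ f : A ⟶ B⟦-(k : ℤ)⟧, f = 0)
    (hη : ∀ (A B : T) (hA : A ∈ coreSet ge le) (hB : B ∈ coreSet ge le) (f : A ⟶ B),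
      F.map f ≫ (η B hB).hom = (η A hA).hom ≫ f)
    {n : ℤ} {X X' : T} {θ : F.obj X ≅ X} (hθ : LeftGood F η n X θ)
    {φ : X ⟶ X'} (hφ : coneIn φ (coreShift ge le (-(n + 1)))) :
    ∃ θ' : F.obj X' ≅ X', LeftGood F η (n + 1) X' θ' ∧ F.map φ ≫ θ'.hom = θ.hom ≫ φ := by
  obtain ⟨Z, g, h, H, hZ⟩ := hφ
  obtain ⟨⟨E, hE, e, he, hinj⟩, hvan⟩ := hθ
  have comm : (zeta F η _ Z hZ).inv ≫ F.map h ≫ (F.commShiftIso (1 : ℤ)).hom.app X ≫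
      θ.hom⟦(1 : ℤ)⟧' - h = 0 := by
    refine eq_zero_of_comp_shift e
      (fun v => hinj _ (coreShift_shift W (by omega) hZ) v) _ ?_
    have h1 := zeta_hom_shift F η W hη (by omega) hZ hE (h ≫ e⟦(1 : ℤ)⟧')
    have h2 := (F.commShiftIso (1 : ℤ)).hom.naturality e
    dsimp at h2
    rw [Preadditive.sub_comp, sub_eq_zero, assoc, assoc, assoc, Iso.inv_comp_eq, ← h1,
      ← Functor.map_comp, ← he, Functor.map_comp, Functor.map_comp, assoc, reassoc_of% h2]
  rw [sub_eq_zero, Iso.inv_comp_eq] at comm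
  obtain ⟨θ', h1, h2⟩ := complete₂ F H θ (zeta F η _ Z hZ) comm
  refine ⟨θ', ⟨⟨Z, hZ, g, h2, fun A hA u hu => ?_⟩, fun k hk A hA u => ?_⟩, h1⟩
  · obtain ⟨v, hv⟩ : ∃ v : A ⟶ X, u = v ≫ φ := Triangle.coyoneda_exact₂ _ H u hu
    rw [hv, hvan _ (by omega) A hA v, zero_comp]
  · obtain ⟨v, hv⟩ : ∃ v : A ⟶ X, u = v ≫ φ := Triangle.coyoneda_exact₂ _ H u
      (coreShift_hom_zero hC hA hZ (by omega) _)
    rw [hv, hvan _ (by omega) A hA v, zero_comp]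

/-- One step of a right tower, for the triangle `D ⟶ Y' ⟶ Y ⟶ D⟦1⟧` with `D = Z⟦-1⟧`, `Z` being
the cone of `ψ`. -/
theorem right_step
    (W : IsPreWeightStructure ge le)
    (hC : ∀ A B : T, A ∈ coreSet ge le → B ∈ coreSet ge le →
      ∀ k : ℕ, 1 ≤ k → ∀ f : A ⟶ B⟦-(k : ℤ)⟧, f = 0)
    (hη : ∀ (A B : T) (hA : A ∈ coreSet ge le) (hB : B ∈ coreSet ge le) (f : A ⟶ B),
      F.map f ≫ (η B hB).hom = (η A hA).hom ≫ f)
    {n : ℤ} {Y Y' : T} {θ : F.obj Y ≅ Y} (hθ : RightGood F η n Y θ)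
    {ψ : Y' ⟶ Y} (hψ : coneIn ψ (coreShift ge le n)) :
    ∃ θ' : F.obj Y' ≅ Y', RightGood F η (n + 1) Y' θ' ∧ F.map ψ ≫ θ.hom = θ'.hom ≫ ψ := by
  obtain ⟨Z, _, _, H, hZ⟩ := hψ
  obtain ⟨⟨E, hE, e, he, hinj⟩, hvan⟩ := hθ
  obtain ⟨p, h, H'⟩ := exists_invRotate H
  have hD : Z⟦(-1 : ℤ)⟧ ∈ coreShift ge le (n + 1) := coreShift_shift W (by omega) hZ
  clear H
  generalize Z⟦(-1 : ℤ)⟧ = D at *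
  have comm : θ.inv ≫ F.map h ≫ (F.commShiftIso (1 : ℤ)).hom.app D ≫
      (zeta F η _ D hD).hom⟦(1 : ℤ)⟧' - h = 0 := by
    refine hinj _ (coreShift_shift W (by omega) hD) _ ?_
    have h1 := zeta_hom_shift F η W hη (by omega) hE hD (e ≫ h)
    have h2 : e ≫ θ.inv = (zeta F η _ E hE).inv ≫ F.map e := by
      rw [Iso.comp_inv_eq, assoc, he, Iso.inv_hom_id_assoc]
    rw [Functor.map_comp, assoc] at h1
    rw [Preadditive.comp_sub, sub_eq_zero, reassoc_of% h2, h1, Iso.inv_hom_id_assoc]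
  rw [sub_eq_zero, Iso.inv_comp_eq] at comm
  obtain ⟨θ', h1, h2⟩ := complete₂ F H' (zeta F η _ D hD) θ comm
  refine ⟨θ', ⟨⟨D, hD, p, h1, fun A hA u hu => ?_⟩, fun k hk A hA u => ?_⟩, h2⟩
  · obtain ⟨v, hv⟩ : ∃ v : Y ⟶ A, u = ψ ≫ v := Triangle.yoneda_exact₂ _ H' u hu
    rw [hv, hvan _ (by omega) A hA v, comp_zero]
  · obtain ⟨v, hv⟩ : ∃ v : Y ⟶ A, u = ψ ≫ v := Triangle.yoneda_exact₂ _ H' u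
      (coreShift_hom_zero hC hD hA (by omega) _)
    rw [hv, hvan _ (by omega) A hA v, comp_zero]

variable [HasColimitsOfShape (Discrete ℕ) T] [HasLimitsOfShape (Discrete ℕ) T]

/-- Every `X ∈ U≤0` has an isomorphism `F X ≅ X` that extends `zeta` on the bottom stage
`A = X₀ ∈ C` of a convergent left tower. -/
theorem left_exists
    (W : IsPreWeightStructure ge le)
    (hC : ∀ A B : T, A ∈ coreSet ge le → B ∈ coreSet ge le →
      ∀ k : ℕ, 1 ≤ k → ∀ f : A ⟶ B⟦-(k : ℤ)⟧, f = 0)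
    (hη : ∀ (A B : T) (hA : A ∈ coreSet ge le) (hB : B ∈ coreSet ge le) (f : A ⟶ B),
      F.map f ≫ (η B hB).hom = (η A hA).hom ≫ f)
    [PreservesColimitsOfShape (Discrete ℕ) F] (hconv : LeftConvergent ge le)
    {X : T} (hX : X ∈ le) :
    ∃ (θ : F.obj X ≅ X) (A : T) (hA : A ∈ coreShift ge le 0) (i : A ⟶ X),
      F.map i ≫ θ.hom = (zeta F η 0 A hA).hom ≫ i ∧ coneIn i (leM le (-1)) := by
  obtain ⟨tw, K, γ, δ, hT, κ, hκ⟩ := hconv X hX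
  have h0 := leftTower_zero tw
  obtain ⟨θ, hθ0, hθ⟩ := exists_seq (α := fun n => F.obj (tw.obj n) ≅ tw.obj n)
    (P := fun n => LeftGood F η n (tw.obj n))
    (R := fun n a b => F.map (tw.φ n) ≫ b.hom = a.hom ≫ tw.φ n)
    (zeta F η 0 _ h0)
    ⟨⟨_, h0, 𝟙 _, by simp, fun A hA u hu => by simpa using hu⟩,
      fun k hk A hA u => coreShift_hom_zero hC hA h0 (by simpa using hk) u⟩
    (fun n x hx => by
      have := left_step F η W hC hη hx (tw.cone_φ n)
      exact_mod_cast this)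
  have hF : IsColimit (Cofan.mk (F.obj (∐ tw.obj)) fun n => F.map (Sigma.ι tw.obj n)) :=
    isColimitCofanMkObjOfIsColimit F _ _ (coproductIsCoproduct tw.obj)
  let s : F.obj (∐ tw.obj) ⟶ ∐ tw.obj :=
    Cofan.IsColimit.desc hF fun n => (θ n).hom ≫ Sigma.ι tw.obj n
  have hs : ∀ n, F.map (Sigma.ι tw.obj n) ≫ s = (θ n).hom ≫ Sigma.ι tw.obj n :=
    fun n => Cofan.IsColimit.fac hF _ n
  let t : (∐ tw.obj) ⟶ F.obj (∐ tw.obj) :=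
    Sigma.desc fun n => (θ n).inv ≫ F.map (Sigma.ι tw.obj n)
  have ht : ∀ n, Sigma.ι tw.obj n ≫ t = (θ n).inv ≫ F.map (Sigma.ι tw.obj n) :=
    fun n => Sigma.ι_desc _ n
  let S : F.obj (∐ tw.obj) ≅ ∐ tw.obj :=
    { hom := s
      inv := t
      hom_inv_id := Cofan.IsColimit.hom_ext hF _ _ fun n => by
        change F.map (Sigma.ι tw.obj n) ≫ _ = F.map (Sigma.ι tw.obj n) ≫ _
        rw [reassoc_of% hs n, ht, Iso.hom_inv_id_assoc, comp_id]
      inv_hom_id := Sigma.hom_ext _ _ fun n => by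
        rw [reassoc_of% ht n, hs, Iso.inv_hom_id_assoc, comp_id] }
  have hφ : ∀ n, Sigma.ι tw.obj n ≫ tw.oneSubPhi =
      Sigma.ι tw.obj n - tw.φ n ≫ Sigma.ι tw.obj (n + 1) := fun n => Sigma.ι_desc _ n
  obtain ⟨c, hc⟩ := complete₃ F hT S S (Cofan.IsColimit.hom_ext hF _ _ fun n => by
    change F.map (Sigma.ι tw.obj n) ≫ F.map _ ≫ s = F.map (Sigma.ι tw.obj n) ≫ s ≫ _
    rw [← Functor.map_comp_assoc, hφ, reassoc_of% hs n, hφ, Functor.map_sub, Functor.map_comp,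
      Preadditive.sub_comp, assoc, hs, hs, reassoc_of% hθ n, Preadditive.comp_sub])
  refine ⟨F.mapIso κ.symm ≪≫ c ≪≫ κ, _, h0, tw.ι 0, ?_, ?_⟩
  · have hc' : F.map γ ≫ c.hom = s ≫ γ := hc
    rw [← hκ 0]
    simp only [Iso.trans_hom, Functor.mapIso_hom, Iso.symm_hom, Functor.map_comp, assoc]
    rw [Iso.map_hom_inv_id_assoc, reassoc_of% hc',
      reassoc_of% hs 0, hθ0]
  · have := tw.cone_ι 0
    simpa using this

/-- Every `Y ∈ U≥0` has an isomorphism `F Y ≅ Y` that lifts `zeta` on the bottom stage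
`B = Y₀ ∈ C` of a convergent right tower. -/
theorem right_exists
    (W : IsPreWeightStructure ge le)
    (hC : ∀ A B : T, A ∈ coreSet ge le → B ∈ coreSet ge le →
      ∀ k : ℕ, 1 ≤ k → ∀ f : A ⟶ B⟦-(k : ℤ)⟧, f = 0)
    (hη : ∀ (A B : T) (hA : A ∈ coreSet ge le) (hB : B ∈ coreSet ge le) (f : A ⟶ B),
      F.map f ≫ (η B hB).hom = (η A hA).hom ≫ f)
    [PreservesLimitsOfShape (Discrete ℕ) F] (hconv : RightConvergent ge le)
    {Y : T} (hY : Y ∈ ge) :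
    ∃ (θ : F.obj Y ≅ Y) (B : T) (hB : B ∈ coreShift ge le 0) (p : Y ⟶ B),
      F.map p ≫ (zeta F η 0 B hB).hom = θ.hom ≫ p ∧ coneIn p (geM ge 0) := by
  obtain ⟨tw, K, σ, δ, hT, lam, hlam⟩ := hconv Y hY
  have h0 := rightTower_zero tw
  obtain ⟨θ, hθ0, hθ⟩ := exists_seq (α := fun n => F.obj (tw.obj n) ≅ tw.obj n)
    (P := fun n => RightGood F η n (tw.obj n))
    (R := fun n a b => F.map (tw.ψ n) ≫ a.hom = b.hom ≫ tw.ψ n)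
    (zeta F η 0 _ h0)
    ⟨⟨_, h0, 𝟙 _, by simp, fun A hA u hu => by simpa using hu⟩,
      fun k hk A hA u => coreShift_hom_zero hC h0 hA (by simpa using hk) u⟩
    (fun n x hx => by
      have := right_step F η W hC hη hx (tw.cone_ψ n)
      exact_mod_cast this)
  have hF : IsLimit (Fan.mk (F.obj (∏ᶜ tw.obj)) fun n => F.map (Pi.π tw.obj n)) :=
    isLimitFanMkObjOfIsLimit F _ _ (productIsProduct tw.obj)
  let s : F.obj (∏ᶜ tw.obj) ⟶ ∏ᶜ tw.obj :=
    Pi.lift fun n => F.map (Pi.π tw.obj n) ≫ (θ n).hom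
  have hs : ∀ n, s ≫ Pi.π tw.obj n = F.map (Pi.π tw.obj n) ≫ (θ n).hom :=
    fun n => Pi.lift_π _ n
  let t : (∏ᶜ tw.obj) ⟶ F.obj (∏ᶜ tw.obj) :=
    Fan.IsLimit.lift hF fun n => Pi.π tw.obj n ≫ (θ n).inv
  have ht : ∀ n, t ≫ F.map (Pi.π tw.obj n) = Pi.π tw.obj n ≫ (θ n).inv :=
    fun n => Fan.IsLimit.fac hF _ n
  let S : F.obj (∏ᶜ tw.obj) ≅ ∏ᶜ tw.obj :=
    { hom := s
      inv := t
      hom_inv_id := Fan.IsLimit.hom_ext hF _ _ fun n => by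
        change (s ≫ t) ≫ F.map (Pi.π tw.obj n) = 𝟙 _ ≫ F.map (Pi.π tw.obj n)
        rw [assoc, ht, reassoc_of% hs n, Iso.hom_inv_id, comp_id, id_comp]
      inv_hom_id := Pi.hom_ext _ _ fun n => by
        rw [assoc, hs, reassoc_of% ht n, Iso.inv_hom_id, comp_id, id_comp] }
  have hψ : ∀ n, tw.oneSubPsi ≫ Pi.π tw.obj n =
      Pi.π tw.obj n - Pi.π tw.obj (n + 1) ≫ tw.ψ n := fun n => Pi.lift_π _ n
  obtain ⟨a, ha⟩ := complete₁ F hT S S (Pi.hom_ext _ _ fun n => by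
    change (F.map _ ≫ s) ≫ _ = (s ≫ _) ≫ _
    rw [assoc, assoc, hs, hψ, ← Functor.map_comp_assoc, hψ, Functor.map_sub, Functor.map_comp,
      Preadditive.sub_comp, Preadditive.comp_sub, assoc, hθ, hs, reassoc_of% hs (n + 1)])
  refine ⟨F.mapIso lam ≪≫ a ≪≫ lam.symm, _, h0, tw.π 0, ?_, ?_⟩
  · have ha' : F.map σ ≫ s = a.hom ≫ σ := ha
    rw [← hlam 0]
    simp only [Iso.trans_hom, Functor.mapIso_hom, Iso.symm_hom, Functor.map_comp, assoc]
    rw [Iso.inv_hom_id_assoc, ← hθ0, ← hs, reassoc_of% ha']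
  · have := tw.cone_π 0
    simpa using this

/-- The isomorphisms provided by `left_exists` and `right_exists` commute with every morphism
`X ⟶ Y`: by orthogonality such a morphism is determined by its composition `A ⟶ X ⟶ Y ⟶ B`,
a morphism of `C`. -/
theorem compat
    (W : IsPreWeightStructure ge le)
    (hC : ∀ A B : T, A ∈ coreSet ge le → B ∈ coreSet ge le →
      ∀ k : ℕ, 1 ≤ k → ∀ f : A ⟶ B⟦-(k : ℤ)⟧, f = 0)
    (hη : ∀ (A B : T) (hA : A ∈ coreSet ge le) (hB : B ∈ coreSet ge le) (f : A ⟶ B),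
      F.map f ≫ (η B hB).hom = (η A hA).hom ≫ f)
    (hconv : TwoSidedConvergent ge le)
    {X Y : T} (hY : Y ∈ ge) (θ : F.obj X ≅ X) (θ' : F.obj Y ≅ Y)
    {A : T} (hA : A ∈ coreShift ge le 0) (i : A ⟶ X)
    (hi : F.map i ≫ θ.hom = (zeta F η 0 A hA).hom ≫ i) (ci : coneIn i (leM le (-1)))
    {B : T} (hB : B ∈ coreShift ge le 0) (p : Y ⟶ B)
    (hp : F.map p ≫ (zeta F η 0 B hB).hom = θ'.hom ≫ p) (cp : coneIn p (geM ge 0))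
    (f : X ⟶ Y) : F.map f ≫ θ'.hom = θ.hom ≫ f := by
  obtain ⟨Z, g, h, H, hZ⟩ := ci
  obtain ⟨Z', g', h', H', hZ'⟩ := cp
  have hinj : ∀ u : X ⟶ Y, i ≫ u ≫ p = 0 → u = 0 := by
    intro u hu
    obtain ⟨q, _, H''⟩ := exists_invRotate H'
    obtain ⟨v, hv⟩ : ∃ v : A ⟶ Z'⟦(-1 : ℤ)⟧, i ≫ u = v ≫ q :=
      Triangle.coyoneda_exact₂ _ H'' (i ≫ u) ((assoc i u p).trans hu)
    have hv0 : v = 0 := orthogonal W hconv hC (coreShift_zero W hA).2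
      (W.ge_iso ((shiftFunctorZero T ℤ).app Z') hZ') v
    obtain ⟨w, hw⟩ : ∃ w : Z ⟶ Y, u = g ≫ w :=
      Triangle.yoneda_exact₂ _ H u (by rw [hv0, zero_comp] at hv; exact hv)
    have hw0 : w = 0 := by
      have := orthogonal W hconv hC hZ hY (w⟦(-1 : ℤ)⟧')
      exact (shiftFunctor T (-1 : ℤ)).map_injective (by rw [this, Functor.map_zero])
    rw [hw, hw0, comp_zero]
  have key : θ.inv ≫ F.map f ≫ θ'.hom - f = 0 := by
    apply hinj
    have h1 : i ≫ θ.inv = (zeta F η 0 A hA).inv ≫ F.map i := by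
      rw [Iso.comp_inv_eq, assoc, hi, Iso.inv_hom_id_assoc]
    have h2 := zeta_naturality F η hη hA hB (i ≫ f ≫ p)
    rw [Functor.map_comp, Functor.map_comp, assoc, assoc, hp] at h2
    rw [Preadditive.sub_comp, Preadditive.comp_sub, sub_eq_zero, assoc, assoc,
      reassoc_of% h1, h2, Iso.inv_hom_id_assoc]
  rw [sub_eq_zero, Iso.inv_comp_eq] at key
  exact key

end Comparison

end PreWeight

/-- Theorem 5.5: if `T` is bi-complete, `(F, ω)` is a bi-continuous
triangle endofunctor, the pre-weight structure is two-sided convergent,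
`Hom(C, Σ^{-k}(C)) = 0` for `k ≥ 1`, and `F` restricted to the core is isomorphic to the
identity (via isomorphisms `η_A : F(A) ≅ A` natural in `A ∈ C`), then `F(X) ≅ X` for
every object `X` of `T`. -/
theorem preWeightStructure_triangleFunctor_fixes_all_objects
    [HasCoproducts.{v} T] [HasProducts.{v} T]
    [HasColimitsOfShape (Discrete ℕ) T] [HasLimitsOfShape (Discrete ℕ) T]
    {ge le : Set T} (W : IsPreWeightStructure ge le)
    (hconv : TwoSidedConvergent ge le)
    (hC : ∀ A B : T, A ∈ coreSet ge le → B ∈ coreSet ge le →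
      ∀ k : ℕ, 1 ≤ k → ∀ f : A ⟶ B⟦-(k : ℤ)⟧, f = 0)
    (F : T ⥤ T) [F.CommShift ℤ] [F.IsTriangulated]
    [∀ J : Type v, PreservesColimitsOfShape (Discrete J) F]
    [∀ J : Type v, PreservesLimitsOfShape (Discrete J) F]
    [PreservesColimitsOfShape (Discrete ℕ) F]
    [PreservesLimitsOfShape (Discrete ℕ) F]
    (η : ∀ (A : T), A ∈ coreSet ge le → (F.obj A ≅ A))
    (hη : ∀ (A B : T) (hA : A ∈ coreSet ge le) (hB : B ∈ coreSet ge le) (f : A ⟶ B),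
      F.map f ≫ (η B hB).hom = (η A hA).hom ≫ f) :
    ∀ X : T, Nonempty (F.obj X ≅ X) := by
  intro Z
  obtain ⟨A, B, f, g, h, hA, hB, H⟩ := W.decomp Z
  -- `Z` is the cone of a morphism `q : B⟦-1⟧ ⟶ A` from `U≤0` to `U≥0`.
  obtain ⟨q, r, H'⟩ := PreWeight.exists_invRotate H
  obtain ⟨θ, A₀, hA₀, i, hi, ci⟩ := PreWeight.left_exists F η W hC hη hconv.1 hB
  obtain ⟨θ', B₀, hB₀, p, hp, cp⟩ := PreWeight.right_exists F η W hC hη hconv.2 hA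
  obtain ⟨c, -⟩ := PreWeight.complete₃ F H' θ θ'
    (PreWeight.compat F η W hC hη hconv hA θ θ' hA₀ i hi ci hB₀ p hp cp q)
  exact ⟨c⟩
end

section
/- Let T and T' be bi-complete triangulated categories and let F : T → T' be a bi-continuous triangle functor. Assume: (1) T carries a pre-weight structure (U≥0, U≤0) of finite dimension; (2) U≤0 is contained in the smallest localizing subcategory of T containing U_b, and U≥0 is contained in the smallest colocalizing subcategory of T containing U_b; (3) F is bounded with respect to (U≥0, U≤0); (4) the restriction of F to U_b is fully faithful. Then F is fully faithful. -/
/-!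
Write `P X Y` (`FFPair`) for: `F` is bijective on `Hom(X⟦m⟧, Y⟦n⟧)` for all integers `m`, `n`.

* By the five lemma, and because `F` preserves coproducts and products, `{X | P X Y}` is localizing
  for every `Y` and `{Y | P X Y}` is colocalizing for every `X`
  (`isLocalizingSub_ffPair`, `isColocalizingSub_ffPair`).
* Finite dimension and boundedness of `F` give an integer `N` such that both `Hom(X, Y)` and
  `Hom(F X, F Y)` vanish for `X ∈ U≥a`, `Y ∈ U≤b`, `b + N ≤ a` (`exists_vanishing`).
* `P X Y` holds for `X ∈ U≥a` and `Y ∈ U≤b` (`ffPair_of_ge_of_le`). Indeed, truncating `X` far up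
  and `Y` far down replaces both by bounded objects, at the price of terms on which the `Hom`
  groups vanish on both sides; the two truncations are carried out one after the other.
* For `Y` bounded, `P X Y` then holds for `X ∈ U≤0` as `U≤0` is in the localizing subcategory
  generated by bounded objects; varying `Y`, it holds for `X ∈ U≤0` and `Y ∈ U≥0`. Since bounded
  objects are in some `U≥a` and in some `U≤b`, the previous item yields in the same way the
  cases `X, Y ∈ U≤0` and `X, Y ∈ U≥0`.

As every object is an extension of an object of `U≥0` and one of `Σ(U≤0)`, two more applications of
the five lemma give the general case. The octahedral axiom is not needed.
-/

open CategoryTheory Category Limits Pretriangulated ZeroObject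

universe v u

variable {T : Type u} [Category.{v} T] [HasZeroObject T] [HasShift T ℤ] [Preadditive T]
  [∀ n : ℤ, (CategoryTheory.shiftFunctor T n).Additive] [Pretriangulated T]

/-- A class of objects defines a (strictly full) triangulated subcategory. -/
def IsTriangulatedSub (S : Set T) : Prop :=
  (∀ Z : T, IsZero Z → Z ∈ S) ∧
  (∀ ⦃X Y : T⦄, (X ≅ Y) → X ∈ S → Y ∈ S) ∧
  (∀ X ∈ S, X⟦(1:ℤ)⟧ ∈ S) ∧
  (∀ X ∈ S, X⟦(-1:ℤ)⟧ ∈ S) ∧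
  star S S ⊆ S

/-- A localizing subcategory: a triangulated subcategory closed under arbitrary
coproducts. -/
def IsLocalizingSub [HasCoproducts.{v} T] (S : Set T) : Prop :=
  IsTriangulatedSub S ∧
  ∀ (J : Type v) (f : J → T), (∀ j, f j ∈ S) → (∐ f) ∈ S

/-- A colocalizing subcategory: a triangulated subcategory closed under arbitrary
products. -/
def IsColocalizingSub [HasProducts.{v} T] (S : Set T) : Prop :=
  IsTriangulatedSub S ∧
  ∀ (J : Type v) (f : J → T), (∀ j, f j ∈ S) → (∏ᶜ f) ∈ S

/-- The pre-weight structure has finite dimension. -/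
def FiniteDimPWS (ge le : Set T) : Prop :=
  ∃ d : ℤ, -1 ≤ d ∧ ∀ X ∈ ge, ∀ Y ∈ leM le (-(d + 1)), ∀ f : X ⟶ Y, f = 0

/-! ### Pairs of objects on which `F` is fully faithful -/

section Auxiliary

set_option linter.unusedSectionVars false

variable {T' : Type u} [Category.{v} T'] [HasZeroObject T'] [HasShift T' ℤ] [Preadditive T']
  [∀ n : ℤ, (CategoryTheory.shiftFunctor T' n).Additive] [Pretriangulated T']
  (F : T ⥤ T')

/-- `F` is bijective on `Hom(X, Y)`. -/
def FFHom (X Y : T) : Prop := Function.Bijective (fun f : X ⟶ Y => F.map f)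

/-- `F` is bijective on `Hom(X⟦m⟧, Y⟦n⟧)` for all shifts `m`, `n`. -/
def FFPair (X Y : T) : Prop := ∀ m n : ℤ, FFHom F (X⟦m⟧) (Y⟦n⟧)

variable {F}

lemma FFHom.of_iso {X X' Y Y' : T} (e : X ≅ X') (e' : Y ≅ Y') (h : FFHom F X Y) :
    FFHom F X' Y' := by
  constructor
  · intro a b hab
    have hab' : F.map a = F.map b := hab
    have := @h.1 (e.hom ≫ a ≫ e'.inv) (e.hom ≫ b ≫ e'.inv) (by simp [hab'])
    simpa using this
  · intro c
    obtain ⟨a, ha⟩ := h.2 (F.map e.hom ≫ c ≫ F.map e'.inv)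
    refine ⟨e.inv ≫ a ≫ e'.hom, ?_⟩
    dsimp only at ha ⊢
    rw [F.map_comp, F.map_comp, ha]
    simp only [assoc, ← F.map_comp, Iso.inv_hom_id, F.map_id, comp_id]
    simp only [← assoc, ← F.map_comp, Iso.inv_hom_id, F.map_id, id_comp]

lemma FFHom.eq_zero [F.PreservesZeroMorphisms] {X Y : T} (h : FFHom F X Y) (f : X ⟶ Y)
    (hf : F.map f = 0) : f = 0 :=
  h.1 (by simpa using hf)

lemma FFHom.of_vanishing {X Y : T} (h : ∀ f : X ⟶ Y, f = 0)
    (h' : ∀ f : F.obj X ⟶ F.obj Y, f = 0) : FFHom F X Y :=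
  ⟨fun a b _ => (h a).trans (h b).symm, fun c => ⟨0, (h' _).trans (h' c).symm⟩⟩

lemma FFHom.sigma {J : Type v} [HasCoproducts.{v} T] [PreservesColimitsOfShape (Discrete J) F]
    (X : J → T) (Y : T) (h : ∀ j, FFHom F (X j) Y) : FFHom F (∐ X) Y := by
  constructor
  · intro a b hab
    refine Sigma.hom_ext _ _ fun j => (h j).1 ?_
    have hab' : F.map a = F.map b := hab
    simp [hab']
  · intro c
    choose a ha using fun j => (h j).2 (F.map (Sigma.ι X j) ≫ c)
    refine ⟨Sigma.desc a, ?_⟩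
    refine Cofan.IsColimit.hom_ext (isColimitOfHasCoproductOfPreservesColimit F X) _ _ fun j => ?_
    have := ha j
    dsimp only [Cofan.inj, Cofan.mk_ι_app] at this ⊢
    rw [← this, ← F.map_comp, Sigma.ι_desc]

lemma FFHom.pi {J : Type v} [HasProducts.{v} T] [PreservesLimitsOfShape (Discrete J) F]
    (X : T) (Y : J → T) (h : ∀ j, FFHom F X (Y j)) : FFHom F X (∏ᶜ Y) := by
  constructor
  · intro a b hab
    refine Pi.hom_ext _ _ fun j => (h j).1 ?_
    have hab' : F.map a = F.map b := hab
    simp [hab']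
  · intro c
    choose a ha using fun j => (h j).2 (c ≫ F.map (Pi.π Y j))
    refine ⟨Pi.lift a, ?_⟩
    refine Fan.IsLimit.hom_ext (isLimitOfHasProductOfPreservesLimit F Y) _ _ fun j => ?_
    have := ha j
    dsimp only [Fan.proj, Fan.mk_π_app] at this ⊢
    rw [← this, ← F.map_comp, Pi.lift_π]

variable [F.CommShift ℤ]

lemma FFHom.shift {X Y : T} (h : FFHom F X Y) (n : ℤ) : FFHom F (X⟦n⟧) (Y⟦n⟧) := by
  have key : ∀ f : X ⟶ Y, F.map (f⟦n⟧') =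
      (F.commShiftIso n).hom.app X ≫ (F.map f)⟦n⟧' ≫ (F.commShiftIso n).inv.app Y := by
    intro f
    rw [← F.commShiftIso_hom_naturality_assoc]
    simp
  constructor
  · intro a b hab
    obtain ⟨a, rfl⟩ := (CategoryTheory.shiftFunctor T n).map_surjective a
    obtain ⟨b, rfl⟩ := (CategoryTheory.shiftFunctor T n).map_surjective b
    dsimp only at hab
    rw [key, key, cancel_epi, cancel_mono] at hab
    rw [h.1 ((CategoryTheory.shiftFunctor T' n).map_injective hab)]
  · intro c
    obtain ⟨d, hd⟩ := (CategoryTheory.shiftFunctor T' n).map_surjective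
      ((F.commShiftIso n).inv.app X ≫ c ≫ (F.commShiftIso n).hom.app Y)
    obtain ⟨a, rfl⟩ := h.2 d
    refine ⟨a⟦n⟧', ?_⟩
    dsimp only at hd ⊢
    rw [key, hd]
    simp

lemma FFHom.of_shift {X Y : T} (n : ℤ) (h : FFHom F (X⟦n⟧) (Y⟦n⟧)) : FFHom F X Y :=
  (h.shift (-n)).of_iso ((shiftFunctorCompIsoId T n (-n) (by simp)).app X)
    ((shiftFunctorCompIsoId T n (-n) (by simp)).app Y)

lemma FFPair.of_shift_target {X Y : T} (h : ∀ n : ℤ, FFHom F X (Y⟦n⟧)) : FFPair F X Y :=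
  fun m n => ((h (n - m)).shift m).of_iso (Iso.refl _)
    ((shiftFunctorAdd' T (n - m) m n (by simp)).symm.app Y)

lemma FFPair.of_shift_source {X Y : T} (h : ∀ n : ℤ, FFHom F (X⟦n⟧) Y) : FFPair F X Y :=
  fun m n => ((h (m - n)).shift n).of_iso
    ((shiftFunctorAdd' T (m - n) n m (by simp)).symm.app X) (Iso.refl _)

lemma FFPair.hom {X Y : T} (h : FFPair F X Y) : FFHom F X Y := (h 0 0).of_shift 0

lemma FFPair.source {X Y : T} (h : FFPair F X Y) (n : ℤ) : FFHom F (X⟦n⟧) Y :=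
  (h n 0).of_iso (Iso.refl _) ((shiftFunctorZero T ℤ).app Y)

lemma FFPair.target {X Y : T} (h : FFPair F X Y) (n : ℤ) : FFHom F X (Y⟦n⟧) :=
  (h 0 n).of_iso ((shiftFunctorZero T ℤ).app X) (Iso.refl _)

lemma FFPair.shift {X Y : T} (h : FFPair F X Y) (a b : ℤ) : FFPair F (X⟦a⟧) (Y⟦b⟧) :=
  fun m n => (h (a + m) (b + n)).of_iso ((shiftFunctorAdd T a m).app X)
    ((shiftFunctorAdd T b n).app Y)

lemma FFPair.of_iso {X X' Y Y' : T} (e : X ≅ X') (e' : Y ≅ Y') (h : FFPair F X Y) :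
    FFPair F X' Y' :=
  fun m n => (h m n).of_iso ((CategoryTheory.shiftFunctor T m).mapIso e)
    ((CategoryTheory.shiftFunctor T n).mapIso e')

lemma FFPair.of_shift {X Y : T} (a b : ℤ) (h : FFPair F (X⟦a⟧) (Y⟦b⟧)) : FFPair F X Y :=
  (h.shift (-a) (-b)).of_iso ((shiftFunctorCompIsoId T a (-a) (by simp)).app X)
    ((shiftFunctorCompIsoId T b (-b) (by simp)).app Y)

/-! ### The five lemma and (co)localizing subcategories -/

variable [F.IsTriangulated]

/-- The five lemma in the target variable. -/
lemma FFHom.five_target {A Z C : T} {f : A ⟶ Z} {g : Z ⟶ C} {h : C ⟶ A⟦(1:ℤ)⟧}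
    (hT : Triangle.mk f g h ∈ distTriang T) {W : T} (hA : FFHom F W A) (hC : FFHom F W C)
    (hA' : FFHom F W (A⟦(1:ℤ)⟧)) (hC' : FFHom F W (C⟦(-1:ℤ)⟧)) : FFHom F W Z := by
  obtain ⟨k, l, hk⟩ : ∃ (k : C⟦(-1:ℤ)⟧ ⟶ A) (l : Z ⟶ (C⟦(-1:ℤ)⟧)⟦(1:ℤ)⟧),
    Triangle.mk k f l ∈ distTriang T := ⟨_, _, inv_rot_of_distTriang _ hT⟩
  have hkf : k ≫ f = 0 := comp_distTriang_mor_zero₁₂ _ hk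
  have hgh : g ≫ h = 0 := comp_distTriang_mor_zero₂₃ _ hT
  constructor
  · intro a b hab
    have h0 : F.map (a - b) = 0 := by
      have hab' : F.map a = F.map b := hab
      rw [F.map_sub, hab', sub_self]
    rw [← sub_eq_zero]
    generalize a - b = φ at h0
    obtain ⟨ψ, rfl⟩ : ∃ ψ : W ⟶ A, φ = ψ ≫ f := Triangle.coyoneda_exact₂ _ hT φ
      (hC.eq_zero (φ ≫ g) (by rw [F.map_comp, h0, zero_comp]))
    obtain ⟨χ, hχ⟩ : ∃ χ : F.obj W ⟶ F.obj (C⟦(-1:ℤ)⟧), F.map ψ = χ ≫ F.map k :=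
      Triangle.coyoneda_exact₂ _ (F.map_distinguished _ hk) (F.map ψ)
        (by rw [F.map_comp] at h0; exact h0)
    obtain ⟨χ, rfl⟩ := hC'.2 χ
    have : ψ = χ ≫ k := hA.1 (by simpa using hχ)
    rw [this, assoc, hkf, comp_zero]
  · intro c
    obtain ⟨α, hα⟩ := hC.2 (c ≫ F.map g)
    dsimp only at hα
    obtain ⟨β, rfl⟩ : ∃ β : W ⟶ Z, α = β ≫ g := Triangle.coyoneda_exact₃ _ hT α
      (hA'.eq_zero (α ≫ h) (by
        rw [F.map_comp, hα, assoc, ← F.map_comp, hgh, F.map_zero, comp_zero]))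
    obtain ⟨γ, hγ⟩ : ∃ γ : F.obj W ⟶ F.obj A, c - F.map β = γ ≫ F.map f :=
      Triangle.coyoneda_exact₂ _ (F.map_distinguished _ hT) (c - F.map β)
        (by
          change (c - F.map β) ≫ F.map g = 0
          rw [Preadditive.sub_comp, ← hα, F.map_comp, sub_self])
    obtain ⟨γ, rfl⟩ := hA.2 γ
    refine ⟨β + γ ≫ f, ?_⟩
    dsimp only at hγ ⊢
    rw [F.map_add, F.map_comp, ← hγ, add_sub_cancel]

/-- The five lemma in the source variable. -/
lemma FFHom.five_source {A Z C : T} {f : A ⟶ Z} {g : Z ⟶ C} {h : C ⟶ A⟦(1:ℤ)⟧}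
    (hT : Triangle.mk f g h ∈ distTriang T) {W : T} (hA : FFHom F A W) (hC : FFHom F C W)
    (hA' : FFHom F (A⟦(1:ℤ)⟧) W) (hC' : FFHom F (C⟦(-1:ℤ)⟧) W) : FFHom F Z W := by
  obtain ⟨k, l, hk⟩ : ∃ (k : C⟦(-1:ℤ)⟧ ⟶ A) (l : Z ⟶ (C⟦(-1:ℤ)⟧)⟦(1:ℤ)⟧),
    Triangle.mk k f l ∈ distTriang T := ⟨_, _, inv_rot_of_distTriang _ hT⟩
  have hr : Triangle.mk g h (-f⟦(1:ℤ)⟧') ∈ distTriang T := rot_of_distTriang _ hT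
  have hkf : k ≫ f = 0 := comp_distTriang_mor_zero₁₂ _ hk
  have hgh : g ≫ h = 0 := comp_distTriang_mor_zero₂₃ _ hT
  constructor
  · intro a b hab
    have h0 : F.map (a - b) = 0 := by
      have hab' : F.map a = F.map b := hab
      rw [F.map_sub, hab', sub_self]
    rw [← sub_eq_zero]
    generalize a - b = φ at h0
    obtain ⟨ψ, rfl⟩ : ∃ ψ : C ⟶ W, φ = g ≫ ψ := Triangle.yoneda_exact₂ _ hT φ
      (hA.eq_zero (f ≫ φ) (by rw [F.map_comp, h0, comp_zero]))
    obtain ⟨χ, hχ⟩ : ∃ χ : F.obj (A⟦(1:ℤ)⟧) ⟶ F.obj W, F.map ψ = F.map h ≫ χ :=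
      Triangle.yoneda_exact₂ _ (F.map_distinguished _ hr) (F.map ψ)
        (by rw [F.map_comp] at h0; exact h0)
    obtain ⟨χ, rfl⟩ := hA'.2 χ
    have : ψ = h ≫ χ := hC.1 (by simpa using hχ)
    rw [this, ← assoc, hgh, zero_comp]
  · intro c
    obtain ⟨α, hα⟩ := hA.2 (F.map f ≫ c)
    dsimp only at hα
    obtain ⟨β, rfl⟩ : ∃ β : Z ⟶ W, α = f ≫ β := Triangle.yoneda_exact₂ _ hk α
      (hC'.eq_zero (k ≫ α) (by
        rw [F.map_comp, hα, ← assoc, ← F.map_comp, hkf, F.map_zero, zero_comp]))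
    obtain ⟨γ, hγ⟩ : ∃ γ : F.obj C ⟶ F.obj W, c - F.map β = F.map g ≫ γ :=
      Triangle.yoneda_exact₂ _ (F.map_distinguished _ hT) (c - F.map β)
        (by
          change F.map f ≫ (c - F.map β) = 0
          rw [Preadditive.comp_sub, ← hα, F.map_comp, sub_self])
    obtain ⟨γ, rfl⟩ := hC.2 γ
    refine ⟨β + g ≫ γ, ?_⟩
    dsimp only at hγ ⊢
    rw [F.map_add, F.map_comp, ← hγ, add_sub_cancel]

lemma FFPair.ext_target {A Z C : T} {f : A ⟶ Z} {g : Z ⟶ C} {h : C ⟶ A⟦(1:ℤ)⟧}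
    (hT : Triangle.mk f g h ∈ distTriang T) {W : T} (hA : FFPair F W A) (hC : FFPair F W C) :
    FFPair F W Z :=
  .of_shift_source fun n => .five_target hT (hA.source n) (hC.source n) (hA n 1) (hC n (-1))

lemma FFPair.ext_source {A Z C : T} {f : A ⟶ Z} {g : Z ⟶ C} {h : C ⟶ A⟦(1:ℤ)⟧}
    (hT : Triangle.mk f g h ∈ distTriang T) {W : T} (hA : FFPair F A W) (hC : FFPair F C W) :
    FFPair F Z W :=
  .of_shift_target fun n => .five_source hT (hA.target n) (hC.target n) (hA 1 n) (hC (-1) n)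

lemma FFPair.zero_source {X : T} (hX : IsZero X) (Y : T) : FFPair F X Y :=
  .of_shift_target fun _ => .of_vanishing (fun _ => hX.eq_of_src _ _)
    (fun _ => (F.map_isZero hX).eq_of_src _ _)

lemma FFPair.zero_target (X : T) {Y : T} (hY : IsZero Y) : FFPair F X Y :=
  .of_shift_source fun _ => .of_vanishing (fun _ => hY.eq_of_tgt _ _)
    (fun _ => (F.map_isZero hY).eq_of_tgt _ _)

lemma isLocalizingSub_ffPair [HasCoproducts.{v} T]
    [∀ J : Type v, PreservesColimitsOfShape (Discrete J) F] (Y : T) :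
    IsLocalizingSub {X | FFPair F X Y} := by
  refine ⟨⟨fun Z hZ => FFPair.zero_source hZ Y, fun X X' e h => FFPair.of_iso e (Iso.refl _) h,
    fun X h => ?_, fun X h => ?_, ?_⟩, fun J f h => ?_⟩
  · exact FFPair.of_iso (Iso.refl _) ((shiftFunctorZero T ℤ).app Y) (FFPair.shift h 1 0)
  · exact FFPair.of_iso (Iso.refl _) ((shiftFunctorZero T ℤ).app Y) (FFPair.shift h (-1) 0)
  · rintro Z ⟨A, C, f, g, h, hA, hC, hT⟩
    exact FFPair.ext_source hT hA hC
  · exact FFPair.of_shift_target fun n => FFHom.sigma f _ fun j => FFPair.target (h j) n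

lemma isColocalizingSub_ffPair [HasProducts.{v} T]
    [∀ J : Type v, PreservesLimitsOfShape (Discrete J) F] (X : T) :
    IsColocalizingSub {Y | FFPair F X Y} := by
  refine ⟨⟨fun Z hZ => FFPair.zero_target X hZ, fun Y Y' e h => FFPair.of_iso (Iso.refl _) e h,
    fun Y h => ?_, fun Y h => ?_, ?_⟩, fun J f h => ?_⟩
  · exact FFPair.of_iso ((shiftFunctorZero T ℤ).app X) (Iso.refl _) (FFPair.shift h 0 1)
  · exact FFPair.of_iso ((shiftFunctorZero T ℤ).app X) (Iso.refl _) (FFPair.shift h 0 (-1))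
  · rintro Z ⟨A, C, f, g, h, hA, hC, hT⟩
    exact FFPair.ext_target hT hA hC
  · exact FFPair.of_shift_source fun n => FFHom.pi _ f fun j => FFPair.source (h j) n

/-! ### The filtrations `U≥m` and `U≤m` -/

variable {ge le : Set T}

namespace IsPreWeightStructure

lemma shift_mem_geM (W : IsPreWeightStructure ge le) {X : T} {n m k : ℤ} (h : X ∈ geM ge k)
    (hk : n + m = k) : X⟦n⟧ ∈ geM ge m :=
  W.ge_iso ((shiftFunctorAdd' T n m k hk).app X) h

lemma shift_mem_leM (W : IsPreWeightStructure ge le) {X : T} {n m k : ℤ} (h : X ∈ leM le k)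
    (hk : n + m = k) : X⟦n⟧ ∈ leM le m :=
  W.le_iso ((shiftFunctorAdd' T n m k hk).app X) h

lemma mem_geM_zero (W : IsPreWeightStructure ge le) {X : T} (h : X ∈ ge) : X ∈ geM ge 0 :=
  W.ge_iso ((shiftFunctorZero T ℤ).symm.app X) h

lemma mem_leM_zero (W : IsPreWeightStructure ge le) {X : T} (h : X ∈ le) : X ∈ leM le 0 :=
  W.le_iso ((shiftFunctorZero T ℤ).symm.app X) h

lemma geM_anti (W : IsPreWeightStructure ge le) {X : T} {a b : ℤ} (hab : b ≤ a)
    (h : X ∈ geM ge a) : X ∈ geM ge b := by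
  induction b, hab using Int.leInductionDown with
  | base => exact h
  | pred n _ ih =>
    exact W.ge_iso ((shiftFunctorAdd' T n (-1) (n - 1) (by lia)).symm.app X) (W.ge_shiftNeg _ ih)

lemma leM_mono (W : IsPreWeightStructure ge le) {X : T} {a b : ℤ} (hab : a ≤ b)
    (h : X ∈ leM le a) : X ∈ leM le b := by
  induction b, hab using Int.leInduction with
  | base => exact h
  | succ n _ ih =>
    exact W.le_iso ((shiftFunctorAdd' T n 1 (n + 1) rfl).symm.app X) (W.le_shiftPos _ ih)

lemma geM_ext (W : IsPreWeightStructure ge le) {A Z C : T} {f : A ⟶ Z} {g : Z ⟶ C}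
    {h : C ⟶ A⟦(1:ℤ)⟧} (hT : Triangle.mk f g h ∈ distTriang T) {m : ℤ} (hA : A ∈ geM ge m)
    (hC : C ∈ geM ge m) : Z ∈ geM ge m :=
  W.ge_ext ⟨_, _, _, _, _, hA, hC, Triangle.shift_distinguished _ hT m⟩

lemma leM_ext (W : IsPreWeightStructure ge le) {A Z C : T} {f : A ⟶ Z} {g : Z ⟶ C}
    {h : C ⟶ A⟦(1:ℤ)⟧} (hT : Triangle.mk f g h ∈ distTriang T) {m : ℤ} (hA : A ∈ leM le m)
    (hC : C ∈ leM le m) : Z ∈ leM le m :=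
  W.le_ext ⟨_, _, _, _, _, hA, hC, Triangle.shift_distinguished _ hT m⟩

lemma mem_boundedSet (W : IsPreWeightStructure ge le) {X : T} {a b : ℤ} (ha : X ∈ geM ge a)
    (hb : X ∈ leM le b) : X ∈ boundedSet ge le :=
  ⟨min a b, b, min_le_right _ _, W.geM_anti (min_le_left _ _) ha, hb⟩

lemma shift_mem_boundedSet (W : IsPreWeightStructure ge le) {X : T} (h : X ∈ boundedSet ge le)
    (n : ℤ) : X⟦n⟧ ∈ boundedSet ge le := by
  obtain ⟨a, b, -, ha, hb⟩ := h
  exact W.mem_boundedSet (W.shift_mem_geM (m := a - n) ha (by lia))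
    (W.shift_mem_leM (m := b - n) hb (by lia))

/-! ### Full faithfulness from `U≥a` to `U≤b` -/

/-- Finite dimension and boundedness of `F` combined: one constant `N` makes the morphisms from
`U≥a` to `U≤b` vanish both in `T` and after applying `F`, as soon as `b + N ≤ a`. Of this only the
resulting (trivial) bijectivity is recorded. -/
lemma exists_vanishing (W : IsPreWeightStructure ge le) (hfd : FiniteDimPWS ge le)
    (hbdd : ∃ n₀ : ℕ, ∀ X ∈ ge, ∀ Y ∈ le, ∀ f : F.obj X ⟶ (F.obj Y)⟦(n₀ : ℤ)⟧, f = 0) :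
    ∃ N : ℤ, ∀ (X Y : T) (a b : ℤ), X ∈ geM ge a → Y ∈ leM le b → b + N ≤ a → FFHom F X Y := by
  obtain ⟨d, -, hd⟩ := hfd
  obtain ⟨n₀, hn⟩ := hbdd
  refine ⟨max (d + 1) n₀, fun X Y a b hX hY hab => FFHom.of_shift a (.of_vanishing ?_ ?_)⟩
  · exact hd _ hX _ (W.shift_mem_leM (W.leM_mono (b := a - (d + 1)) (by lia) hY) (by lia))
  · intro f
    have hY' : Y⟦a - n₀⟧ ∈ le := W.leM_mono (b := a - n₀) (by lia) hY
    let e : F.obj (Y⟦a⟧) ≅ (F.obj (Y⟦a - n₀⟧))⟦(n₀ : ℤ)⟧ :=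
      F.mapIso ((shiftFunctorAdd' T (a - n₀) n₀ a (by lia)).app Y) ≪≫
        (F.commShiftIso (n₀ : ℤ)).app _
    have := hn _ hX _ hY' (f ≫ e.hom)
    rwa [← cancel_mono e.hom, zero_comp]

/-- Full faithfulness from `U≥a` to bounded objects: a suitable shift of `X` is an extension of a
bounded object by an object of `U≥0`, and the latter has no morphisms to the corresponding
shift of `Y`. -/
lemma ffHom_of_ge_of_bounded (W : IsPreWeightStructure ge le) {N : ℤ}
    (hN : ∀ (X Y : T) (a b : ℤ), X ∈ geM ge a → Y ∈ leM le b → b + N ≤ a → FFHom F X Y)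
    (hff : ∀ (X Y : T), X ∈ boundedSet ge le → Y ∈ boundedSet ge le → FFHom F X Y)
    {X Y : T} {a : ℤ} (hX : X ∈ geM ge a) (hY : Y ∈ boundedSet ge le) : FFHom F X Y := by
  have hYb := hY
  obtain ⟨-, b, -, -, hb⟩ := hYb
  -- `n` is chosen so that `Y⟦n⟧ ∈ U≤(-N-1)`, hence `N`-separated from `U≥(-1)`, which contains
  -- both `A` and `A⟦1⟧`
  set n : ℤ := b + N + 1 with hn
  have hYn : Y⟦n⟧ ∈ leM le (-N - 1) := W.shift_mem_leM hb (by lia)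
  have hYn' := W.shift_mem_boundedSet hY n
  refine FFHom.of_shift n ?_
  obtain ⟨A, C, f, g, h, hA, hC, hT⟩ := W.decomp (X⟦n⟧)
  have hA0 := W.mem_geM_zero hA
  have hA1 : A⟦(1:ℤ)⟧ ∈ geM ge (-1) := W.shift_mem_geM hA0 (by lia)
  have hCb : C ∈ boundedSet ge le := by
    refine W.mem_boundedSet (a := min (a - n) (-1)) ?_ hC
    refine W.geM_ext (rot_of_distTriang _ hT) (W.geM_anti (min_le_left _ _) ?_)
      (W.geM_anti (min_le_right _ _) hA1)
    exact W.shift_mem_geM hX (by lia)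
  exact .five_source hT (hN _ _ 0 _ hA0 hYn (by lia)) (hff _ _ hCb hYn')
    (hN _ _ (-1) _ hA1 hYn (by lia)) (hff _ _ (W.shift_mem_boundedSet hCb _) hYn')

/-- The objects of `U≤b` are truncated from below to bounded ones, the remainder receiving no
morphisms from the given object of `U≥a`. -/
lemma ffHom_of_ge_of_le (W : IsPreWeightStructure ge le) {N : ℤ}
    (hN : ∀ (X Y : T) (a b : ℤ), X ∈ geM ge a → Y ∈ leM le b → b + N ≤ a → FFHom F X Y)
    (hff : ∀ (X Y : T), X ∈ boundedSet ge le → Y ∈ boundedSet ge le → FFHom F X Y)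
    {X Y : T} {a b : ℤ} (hX : X ∈ geM ge a) (hY : Y ∈ leM le b) : FFHom F X Y := by
  -- `n` is chosen so that `X⟦n⟧ ∈ U≥N`, hence `N`-separated from `U≤0`, which contains
  -- both `C` and `C⟦-1⟧`
  set n : ℤ := a - N with hn
  have hXn : X⟦n⟧ ∈ geM ge N := W.shift_mem_geM hX (by lia)
  refine FFHom.of_shift n ?_
  obtain ⟨A, C, f, g, h, hA, hC, hT⟩ := W.decomp (Y⟦n⟧)
  have hC1 : C⟦(-1:ℤ)⟧ ∈ leM le 0 := W.shift_mem_leM hC (by lia)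
  have hAb : A ∈ boundedSet ge le := by
    refine W.mem_boundedSet (b := max (b - n) 0) (W.mem_geM_zero hA) ?_
    refine W.leM_ext (inv_rot_of_distTriang _ hT) (W.leM_mono (le_max_right _ _) hC1)
      (W.leM_mono (le_max_left _ _) ?_)
    exact W.shift_mem_leM hY (by lia)
  exact .five_target hT (W.ffHom_of_ge_of_bounded hN hff hXn hAb) (hN _ _ _ _ hXn hC (by lia))
    (W.ffHom_of_ge_of_bounded hN hff hXn (W.shift_mem_boundedSet hAb _))
    (hN _ _ _ _ hXn hC1 (by lia))

lemma ffPair_of_ge_of_le (W : IsPreWeightStructure ge le) {N : ℤ}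
    (hN : ∀ (X Y : T) (a b : ℤ), X ∈ geM ge a → Y ∈ leM le b → b + N ≤ a → FFHom F X Y)
    (hff : ∀ (X Y : T), X ∈ boundedSet ge le → Y ∈ boundedSet ge le → FFHom F X Y)
    {X Y : T} {a b : ℤ} (hX : X ∈ geM ge a) (hY : Y ∈ leM le b) : FFPair F X Y :=
  fun m n => W.ffHom_of_ge_of_le hN hff (W.shift_mem_geM (m := a - m) hX (by lia))
    (W.shift_mem_leM (m := b - n) hY (by lia))

end IsPreWeightStructure

end Auxiliary

/-- Theorem 5.7: let `F : T → T'` be a bi-continuous triangle functor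
between bi-complete triangulated categories.  Assume (1) `T` carries a pre-weight
structure of finite dimension; (2) `U≤0` lies in the smallest localizing subcategory
containing `U_b`, and `U≥0` lies in the smallest colocalizing subcategory containing
`U_b`; (3) `F` is bounded with respect to the pre-weight structure; (4) the restriction
of `F` to `U_b` is fully faithful.  Then `F` is fully faithful. -/
theorem preWeightStructure_extend_fully_faithful
    [HasCoproducts.{v} T] [HasProducts.{v} T]
    {T' : Type u} [Category.{v} T'] [HasZeroObject T'] [HasShift T' ℤ] [Preadditive T']
    [∀ n : ℤ, (CategoryTheory.shiftFunctor T' n).Additive] [Pretriangulated T']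
    [HasCoproducts.{v} T'] [HasProducts.{v} T']
    (F : T ⥤ T') [F.CommShift ℤ] [F.IsTriangulated]
    [∀ J : Type v, PreservesColimitsOfShape (Discrete J) F]
    [∀ J : Type v, PreservesLimitsOfShape (Discrete J) F]
    {ge le : Set T} (W : IsPreWeightStructure ge le)
    (hfd : FiniteDimPWS ge le)
    (hloc : ∀ X ∈ le, ∀ S : Set T, IsLocalizingSub S → boundedSet ge le ⊆ S → X ∈ S)
    (hcoloc : ∀ X ∈ ge, ∀ S : Set T, IsColocalizingSub S → boundedSet ge le ⊆ S → X ∈ S)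
    (hbdd : ∃ n₀ : ℕ, ∀ X ∈ ge, ∀ Y ∈ le,
      ∀ f : F.obj X ⟶ (F.obj Y)⟦(n₀ : ℤ)⟧, f = 0)
    (hff : ∀ (X Y : T), X ∈ boundedSet ge le → Y ∈ boundedSet ge le →
      Function.Bijective (fun f : X ⟶ Y => F.map f)) :
    ∀ X Y : T, Function.Bijective (fun f : X ⟶ Y => F.map f) := by
  obtain ⟨N, hN⟩ := W.exists_vanishing (F := F) hfd hbdd
  have hgl : ∀ {X Y : T} {a b : ℤ}, X ∈ geM ge a → Y ∈ leM le b → FFPair F X Y :=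
    fun hX hY => W.ffPair_of_ge_of_le hN hff hX hY
  have hlb : ∀ X ∈ le, ∀ Y ∈ boundedSet ge le, FFPair F X Y := by
    refine fun X hX Y hY => hloc X hX _ (isLocalizingSub_ffPair Y) fun X' hX' m n => ?_
    exact hff _ _ (W.shift_mem_boundedSet hX' m) (W.shift_mem_boundedSet hY n)
  have hlg : ∀ X ∈ le, ∀ Y ∈ ge, FFPair F X Y := fun X hX Y hY =>
    hcoloc Y hY _ (isColocalizingSub_ffPair X) (hlb X hX)
  have hll : ∀ X ∈ le, ∀ Y ∈ le, FFPair F X Y := by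
    refine fun X hX Y hY => hloc X hX _ (isLocalizingSub_ffPair Y) ?_
    rintro X' ⟨a, -, -, ha, -⟩
    exact hgl ha (W.mem_leM_zero hY)
  have hgg : ∀ X ∈ ge, ∀ Y ∈ ge, FFPair F X Y := by
    refine fun X hX Y hY => hcoloc Y hY _ (isColocalizingSub_ffPair X) ?_
    rintro Y' ⟨-, b, -, -, hb⟩
    exact hgl (W.mem_geM_zero hX) hb
  intro X Y
  obtain ⟨A, C, f, g, h, hA, hC, hT⟩ := W.decomp X
  obtain ⟨A', C', f', g', h', hA', hC', hT'⟩ := W.decomp Y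
  refine FFPair.hom (F := F) (.ext_source hT (.ext_target hT' ?_ ?_) (.ext_target hT' ?_ ?_))
  · exact hgg A hA A' hA'
  · exact hgl (W.mem_geM_zero hA) hC'
  · exact .of_shift (-1) 0 (hlg _ hC _ (W.mem_geM_zero hA'))
  · exact .of_shift (-1) (-1) (hll _ hC _ hC')
end

section
/- Let A be an additive category with arbitrary coproducts and products, and let F : K(A) → K(A) be a bi-continuous triangle endofunctor (preserving arbitrary coproducts and products). Assume that F sends each object of A (viewed as a stalk complex concentrated in degree zero) to an object of A, and that the restriction F|_A : A → A is isomorphic to the identity functor of A. Then F is isomorphic, as a triangle functor, to a pseudo-identity on K(A) with respect to the canonical pre-weight structure. -/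
/-!
The functor `F` is shown to be fully faithful with `F.obj X ≅ X` for every `X`; a pseudo-identity
is then obtained by conjugating `F` with a family of isomorphisms `F.obj X ≅ X` which is natural
on the core.

*Core and stalks.* Every object of the core is a retract of a stalk complex (`exists_retract`), so
the given isomorphism of functors on `A` extends to a natural family `ψ` on the core
(`exists_core_iso`). Desuspending it gives isomorphisms on the objects concentrated in a single
degree, natural also with respect to morphisms `X ⟶ Y⟦1⟧` between consecutive degrees
(`StalkIsos`, `nonempty_stalkIsos`).

*Isomorphisms on all objects.* On the brutal truncations to `[b, b + n]` compatible isomorphisms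
are constructed by induction on `n`: the obstruction to extending one along a truncation triangle
lives on morphisms between consecutive degrees, where `StalkIsos` applies, because
morphisms between complexes with disjoint supports vanish (`Sup.eq_zero`). A homotopy limit gives
complexes bounded below (`exists_theta_ge`), and a homotopy colimit gives arbitrary complexes
(`exists_theta`); `F` preserves both since it preserves countable products and coproducts.

*Full faithfulness.* `Bij F X Y` says that `F` is bijective on `X ⟶ Y`. It holds for stalks, hence
by the five lemma for bounded complexes, then for `X` bounded below and `Y` bounded above by
cutting off parts which do not see each other, and finally for all `X` and `Y` by homotopy limits
in `Y` and homotopy colimits in `X` (`bij_all`).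
-/

open CategoryTheory Category Limits Pretriangulated ZeroObject

universe v u

variable {T : Type u} [Category.{v} T] [HasZeroObject T] [HasShift T ℤ] [Preadditive T]
  [∀ n : ℤ, (CategoryTheory.shiftFunctor T n).Additive] [Pretriangulated T]

/-- A pseudo-identity with respect to the pre-weight structure `(ge, le)`: an
autoequivalence which fixes every object on the nose and restricts to the identity
functor on the core.  (That it is moreover a triangle functor is imposed separately.) -/
structure IsPseudoIdentity (ge le : Set T) (F : T ⥤ T) : Prop where
  isEquivalence : F.IsEquivalence
  obj_eq : ∀ X : T, F.obj X = X
  map_core : ∀ (X Y : T), X ∈ coreSet ge le → Y ∈ coreSet ge le → ∀ f : X ⟶ Y,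
    F.map f = eqToHom (obj_eq X) ≫ f ≫ eqToHom (obj_eq Y).symm

universe v₂ u₂

variable (A : Type u₂) [Category.{v₂} A] [Preadditive A] [HasZeroObject A]
  [HasBinaryBiproducts A]

/-- `K≥0`: objects of the homotopy category isomorphic to a complex concentrated in
non-negative degrees. -/
def Kge : Set (HomotopyCategory A (ComplexShape.up ℤ)) :=
  {X | ∃ K : CochainComplex A ℤ, (∀ n : ℤ, n < 0 → IsZero (K.X n)) ∧
    Nonempty (X ≅ (HomotopyCategory.quotient A (ComplexShape.up ℤ)).obj K)}

/-- `K≤0`: objects of the homotopy category isomorphic to a complex concentrated in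
non-positive degrees. -/
def Kle : Set (HomotopyCategory A (ComplexShape.up ℤ)) :=
  {X | ∃ K : CochainComplex A ℤ, (∀ n : ℤ, 0 < n → IsZero (K.X n)) ∧
    Nonempty (X ≅ (HomotopyCategory.quotient A (ComplexShape.up ℤ)).obj K)}

/-- The functor `A ⥤ K(A)` sending an object to the associated stalk complex
concentrated in degree zero. -/
noncomputable def stalkK : A ⥤ HomotopyCategory A (ComplexShape.up ℤ) :=
  HomologicalComplex.single A (ComplexShape.up ℤ) 0 ⋙
    HomotopyCategory.quotient A (ComplexShape.up ℤ)

set_option linter.unusedSectionVars false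

namespace PseudoIdentity

/-! ### Bijectivity on morphisms and comparison isomorphisms in triangulated categories -/

section Triangulated

variable (F : T ⥤ T)

/-- `F` induces a bijection from the morphisms `X ⟶ Y` to the morphisms `F.obj X ⟶ F.obj Y`. -/
def Bij (X Y : T) : Prop := Function.Bijective (fun f : X ⟶ Y => F.map f)

variable {F}

lemma Bij.of_iso {X X' Y Y' : T} (h : Bij F X Y) (e : X ≅ X') (e' : Y ≅ Y') : Bij F X' Y' := by
  constructor
  · intro f g hfg
    have h1 : e.hom ≫ f ≫ e'.inv = e.hom ≫ g ≫ e'.inv := by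
      apply h.1
      dsimp at hfg ⊢
      simp [hfg]
    simpa using h1
  · intro f
    obtain ⟨g, hg⟩ := h.2 (F.map e.hom ≫ f ≫ F.map e'.inv)
    refine ⟨e.inv ≫ g ≫ e'.hom, ?_⟩
    dsimp at hg ⊢
    rw [F.map_comp, F.map_comp, hg]
    simp [← F.map_comp_assoc, ← F.map_comp]

/-- If `X ⟶ Y` is trivial, then so is `F.obj X ⟶ F.obj Y`, because `F` fixes both objects up to
isomorphism. -/
lemma Bij.of_unique {X Y : T} (θX : F.obj X ≅ X) (θY : F.obj Y ≅ Y) (h : ∀ f : X ⟶ Y, f = 0) :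
    Bij F X Y := by
  constructor
  · intro f g _
    rw [h f, h g]
  · intro f
    refine ⟨0, ?_⟩
    have h1 : θX.inv ≫ f ≫ θY.hom = θX.inv ≫ F.map 0 ≫ θY.hom := by
      rw [h (θX.inv ≫ f ≫ θY.hom), h (θX.inv ≫ F.map 0 ≫ θY.hom)]
    simpa using h1.symm

lemma Bij.of_natural {X Y : T} (θX : F.obj X ≅ X) (θY : F.obj Y ≅ Y)
    (h : ∀ f : X ⟶ Y, F.map f ≫ θY.hom = θX.hom ≫ f) :
    Bij F X Y := by
  have h' : ∀ f : X ⟶ Y, F.map f = θX.hom ≫ f ≫ θY.inv := fun f => by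
    rw [← assoc, ← h]; simp
  constructor
  · intro f g hfg
    dsimp at hfg
    simpa [h'] using hfg
  · intro f
    exact ⟨θX.inv ≫ f ≫ θY.hom, by simp [h']⟩

variable [F.CommShift ℤ]

lemma Bij.shift_iff {X Y : T} (n : ℤ) : Bij F (X⟦n⟧) (Y⟦n⟧) ↔ Bij F X Y := by
  have key : ∀ f : X ⟶ Y, F.map (f⟦n⟧') =
      (F.commShiftIso n).hom.app X ≫ (F.map f)⟦n⟧' ≫ (F.commShiftIso n).inv.app Y := fun f => by
    have := (F.commShiftIso n).hom.naturality f
    dsimp at this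
    rw [← reassoc_of% this]
    simp
  have key' : ∀ f g : X ⟶ Y, F.map (f⟦n⟧') = F.map (g⟦n⟧') ↔ F.map f = F.map g := fun f g => by
    rw [key, key]
    refine ⟨fun h => ?_, fun h => by rw [h]⟩
    apply (shiftFunctor T n).map_injective
    rwa [cancel_epi, cancel_mono] at h
  constructor
  · intro h
    refine ⟨fun f g hfg => ?_, fun f => ?_⟩
    · apply (shiftFunctor T n).map_injective
      exact h.1 ((key' f g).2 hfg)
    · obtain ⟨g, hg⟩ := h.2 ((F.commShiftIso n).hom.app X ≫ f⟦n⟧' ≫ (F.commShiftIso n).inv.app Y)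
      obtain ⟨g, rfl⟩ := (shiftFunctor T n).map_surjective g
      refine ⟨g, ?_⟩
      dsimp at hg ⊢
      rw [key] at hg
      apply (shiftFunctor T n).map_injective
      rwa [cancel_epi, cancel_mono] at hg
  · intro h
    refine ⟨fun f g hfg => ?_, fun f => ?_⟩
    · obtain ⟨g, rfl⟩ := (shiftFunctor T n).map_surjective g
      obtain ⟨f, rfl⟩ := (shiftFunctor T n).map_surjective f
      rw [h.1 ((key' f g).1 hfg)]
    · obtain ⟨g, hg⟩ := (shiftFunctor T n).map_surjective
        ((F.commShiftIso n).inv.app X ≫ f ≫ (F.commShiftIso n).hom.app Y)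
      obtain ⟨g, rfl⟩ := h.2 g
      refine ⟨g⟦n⟧', ?_⟩
      dsimp at hg ⊢
      rw [key, hg]
      simp

lemma Bij.shift_left {X Y : T} (a b : ℤ) (hab : a + b = 0) (h : Bij F X (Y⟦a⟧)) :
    Bij F (X⟦b⟧) Y :=
  ((Bij.shift_iff b).2 h).of_iso (Iso.refl _) ((shiftFunctorCompIsoId T a b hab).app Y)

lemma Bij.shift_right {X Y : T} (a b : ℤ) (hab : a + b = 0) (h : Bij F (X⟦a⟧) Y) :
    Bij F X (Y⟦b⟧) :=
  ((Bij.shift_iff b).2 h).of_iso ((shiftFunctorCompIsoId T a b hab).app X) (Iso.refl _)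

section

variable {X₁ X₂ X₃ : T} {f : X₁ ⟶ X₂} {g : X₂ ⟶ X₃} {h : X₃ ⟶ X₁⟦(1 : ℤ)⟧}

lemma yoneda₂ (hT : Triangle.mk f g h ∈ distTriang T) {Y : T} (a : X₂ ⟶ Y) (ha : f ≫ a = 0) :
    ∃ b : X₃ ⟶ Y, a = g ≫ b := Triangle.yoneda_exact₂ _ hT a ha

lemma yoneda₃ (hT : Triangle.mk f g h ∈ distTriang T) {Y : T} (a : X₃ ⟶ Y) (ha : g ≫ a = 0) :
    ∃ b : X₁⟦(1 : ℤ)⟧ ⟶ Y, a = h ≫ b := Triangle.yoneda_exact₃ _ hT a ha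

lemma coyoneda₂ (hT : Triangle.mk f g h ∈ distTriang T) {Y : T} (a : Y ⟶ X₂) (ha : a ≫ g = 0) :
    ∃ b : Y ⟶ X₁, a = b ≫ f := Triangle.coyoneda_exact₂ _ hT a ha

lemma coyoneda₃ (hT : Triangle.mk f g h ∈ distTriang T) {Y : T} (a : Y ⟶ X₃) (ha : a ≫ h = 0) :
    ∃ b : Y ⟶ X₂, a = b ≫ g := Triangle.coyoneda_exact₃ _ hT a ha

lemma comp₁₂ (hT : Triangle.mk f g h ∈ distTriang T) : f ≫ g = 0 :=
  comp_distTriang_mor_zero₁₂ _ hT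

lemma comp₂₃ (hT : Triangle.mk f g h ∈ distTriang T) : g ≫ h = 0 :=
  comp_distTriang_mor_zero₂₃ _ hT

lemma exists_invRotate (hT : Triangle.mk f g h ∈ distTriang T) :
    ∃ (m : X₃⟦(-1 : ℤ)⟧ ⟶ X₁) (k : X₂ ⟶ X₃⟦(-1 : ℤ)⟧⟦(1 : ℤ)⟧),
      Triangle.mk m f k ∈ distTriang T :=
  ⟨_, _, inv_rot_of_distTriang _ hT⟩

variable [F.IsTriangulated]

lemma map_dist (hT : Triangle.mk f g h ∈ distTriang T) :
    Triangle.mk (F.map f) (F.map g) (F.map h ≫ (F.commShiftIso (1 : ℤ)).hom.app X₁) ∈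
      distTriang T := F.map_distinguished _ hT

/-- The five lemma in the source variable. -/
lemma Bij.tri_left {Y : T} (hT : Triangle.mk f g h ∈ distTriang T)
    (h₁ : Bij F X₁ Y) (h₃ : Bij F X₃ Y) (h₁' : Bij F (X₁⟦(1 : ℤ)⟧) Y)
    (h₃' : Bij F (X₃⟦(-1 : ℤ)⟧) Y) : Bij F X₂ Y := by
  have hFT := map_dist (F := F) hT
  constructor
  · refine (injective_iff_map_eq_zero (F.mapAddHom (X := X₂) (Y := Y))).2 fun a ha => ?_
    replace ha : F.map a = 0 := ha
    obtain ⟨b, rfl⟩ := yoneda₂ hT a (h₁.1 (by simp [ha]))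
    obtain ⟨c, hc⟩ := yoneda₃ hFT (F.map b) (by rw [← F.map_comp, ha])
    obtain ⟨d, hd⟩ := h₁'.2 ((F.commShiftIso (1 : ℤ)).hom.app X₁ ≫ c)
    replace hd : F.map d = _ := hd
    have hb : b = h ≫ d := h₃.1 (by simp [hc, hd])
    rw [hb, ← assoc, comp₂₃ hT, zero_comp]
  · intro a
    obtain ⟨b, hb⟩ := h₁.2 (F.map f ≫ a)
    replace hb : F.map b = _ := hb
    obtain ⟨m, k, hmk⟩ := exists_invRotate hT
    obtain ⟨c, rfl⟩ := yoneda₂ hmk b (h₃'.1 (by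
      dsimp only
      rw [F.map_comp, hb, ← assoc, ← F.map_comp, comp₁₂ hmk]
      simp))
    obtain ⟨d, hd⟩ := yoneda₂ hFT (a - F.map c) (by
      rw [Preadditive.comp_sub, ← hb, F.map_comp, sub_self])
    obtain ⟨d, rfl⟩ := h₃.2 d
    refine ⟨c + g ≫ d, ?_⟩
    dsimp only at hd ⊢
    rw [F.map_add, F.map_comp, ← hd]
    abel

/-- The five lemma in the target variable. -/
lemma Bij.tri_right {Y : T} (hT : Triangle.mk f g h ∈ distTriang T)
    (h₁ : Bij F Y X₁) (h₃ : Bij F Y X₃) (h₁' : Bij F Y (X₁⟦(1 : ℤ)⟧))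
    (h₃' : Bij F Y (X₃⟦(-1 : ℤ)⟧)) : Bij F Y X₂ := by
  have hFT := map_dist (F := F) hT
  constructor
  · refine (injective_iff_map_eq_zero (F.mapAddHom (X := Y) (Y := X₂))).2 fun a ha => ?_
    replace ha : F.map a = 0 := ha
    obtain ⟨b, rfl⟩ := coyoneda₂ hT a (h₃.1 (by simp [ha]))
    obtain ⟨m, k, hmk⟩ := exists_invRotate hT
    obtain ⟨c, hc⟩ := coyoneda₂ (map_dist (F := F) hmk) (F.map b) (by rw [← F.map_comp, ha])
    obtain ⟨d, rfl⟩ := h₃'.2 c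
    have hb : b = d ≫ m := h₁.1 (by simp [hc])
    rw [hb, assoc, comp₁₂ hmk, comp_zero]
  · intro a
    obtain ⟨b, hb⟩ := h₃.2 (a ≫ F.map g)
    replace hb : F.map b = _ := hb
    obtain ⟨c, rfl⟩ := coyoneda₃ hT b (h₁'.1 (by
      dsimp only
      rw [F.map_comp, hb, assoc, ← F.map_comp, comp₂₃ hT]
      simp))
    obtain ⟨d, hd⟩ := coyoneda₂ hFT (a - F.map c) (by
      rw [Preadditive.sub_comp, ← hb, F.map_comp, sub_self])
    obtain ⟨d, rfl⟩ := h₁.2 d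
    refine ⟨c + d ≫ f, ?_⟩
    dsimp only at hd ⊢
    rw [F.map_add, F.map_comp, ← hd]
    abel

/-- Isomorphisms on the outer terms of a triangle which are compatible with the connecting
morphism extend to the middle term. -/
lemma exists_iso₂ (hT : Triangle.mk f g h ∈ distTriang T)
    (θ₁ : F.obj X₁ ≅ X₁) (θ₃ : F.obj X₃ ≅ X₃)
    (comm : F.map h ≫ (F.commShiftIso (1 : ℤ)).hom.app X₁ ≫ θ₁.hom⟦(1 : ℤ)⟧' = θ₃.hom ≫ h) :
    ∃ θ₂ : F.obj X₂ ≅ X₂, F.map f ≫ θ₂.hom = θ₁.hom ≫ f ∧ F.map g ≫ θ₃.hom = θ₂.hom ≫ g :=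
  let e := isoTriangleOfIso₁₃ _ _ (map_dist (F := F) hT) hT θ₁ θ₃ ((assoc _ _ _).trans comm)
  ⟨Triangle.π₂.mapIso e, e.hom.comm₁, e.hom.comm₂⟩

lemma exists_iso₃ (hT : Triangle.mk f g h ∈ distTriang T)
    (θ₁ : F.obj X₁ ≅ X₁) (θ₂ : F.obj X₂ ≅ X₂) (comm : F.map f ≫ θ₂.hom = θ₁.hom ≫ f) :
    ∃ θ₃ : F.obj X₃ ≅ X₃, F.map g ≫ θ₃.hom = θ₂.hom ≫ g :=
  let e := isoTriangleOfIso₁₂ _ _ (map_dist (F := F) hT) hT θ₁ θ₂ comm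
  ⟨Triangle.π₃.mapIso e, e.hom.comm₂⟩

lemma exists_iso₁ (hT : Triangle.mk f g h ∈ distTriang T)
    (θ₂ : F.obj X₂ ≅ X₂) (θ₃ : F.obj X₃ ≅ X₃) (comm : F.map g ≫ θ₃.hom = θ₂.hom ≫ g) :
    ∃ θ₁ : F.obj X₁ ≅ X₁, F.map f ≫ θ₂.hom = θ₁.hom ≫ f := by
  have hFT := map_dist (F := F) hT
  obtain ⟨a, h₁, h₂⟩ := complete_distinguished_triangle_morphism₁ _ _ hFT hT θ₂.hom θ₃.hom comm
  have : IsIso a := isIso₁_of_isIso₂₃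
    { hom₁ := a, hom₂ := θ₂.hom, hom₃ := θ₃.hom, comm₁ := h₁, comm₂ := comm, comm₃ := h₂ }
    hFT hT (inferInstanceAs (IsIso θ₂.hom)) (inferInstanceAs (IsIso θ₃.hom))
  exact ⟨@asIso _ _ _ _ a this, h₁⟩

end

end Triangulated

section Products

variable {F : T ⥤ T}

lemma Bij.coprod [PreservesColimitsOfShape (Discrete ℕ) F] {X : ℕ → T} {W Y : T}
    {u : ∀ n, X n ⟶ W} (hu : IsColimit (Cofan.mk W u)) (h : ∀ n, Bij F (X n) Y) : Bij F W Y := by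
  have hFu := isColimitCofanMkObjOfIsColimit F X u hu
  constructor
  · intro f g hfg
    refine Cofan.IsColimit.hom_ext hu _ _ fun n => (h n).1 ?_
    dsimp at hfg ⊢
    rw [F.map_comp, F.map_comp, hfg]
  · intro f
    choose a ha using fun n => (h n).2 (F.map (u n) ≫ f)
    refine ⟨Cofan.IsColimit.desc hu a, Cofan.IsColimit.hom_ext hFu _ _ fun n => ?_⟩
    have h1 : u n ≫ Cofan.IsColimit.desc hu a = a n := Cofan.IsColimit.fac hu a n
    change F.map (u n) ≫ F.map _ = F.map (u n) ≫ f
    rw [← ha n, ← F.map_comp, h1]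

lemma Bij.prod [PreservesLimitsOfShape (Discrete ℕ) F] {Y : ℕ → T} {W X : T}
    {u : ∀ n, W ⟶ Y n} (hu : IsLimit (Fan.mk W u)) (h : ∀ n, Bij F X (Y n)) : Bij F X W := by
  have hFu := isLimitFanMkObjOfIsLimit F Y u hu
  constructor
  · intro f g hfg
    refine Fan.IsLimit.hom_ext hu _ _ fun n => (h n).1 ?_
    dsimp at hfg ⊢
    rw [F.map_comp, F.map_comp, hfg]
  · intro f
    choose a ha using fun n => (h n).2 (f ≫ F.map (u n))
    refine ⟨Fan.IsLimit.lift hu a, Fan.IsLimit.hom_ext hFu _ _ fun n => ?_⟩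
    have h1 : Fan.IsLimit.lift hu a ≫ u n = a n := Fan.IsLimit.fac hu a n
    change F.map _ ≫ F.map (u n) = f ≫ F.map (u n)
    rw [← ha n, ← F.map_comp, h1]

lemma exists_iso_coprod [PreservesColimitsOfShape (Discrete ℕ) F] {X : ℕ → T} {W : T}
    {u : ∀ n, X n ⟶ W} (hu : IsColimit (Cofan.mk W u)) (θ : ∀ n, F.obj (X n) ≅ X n) :
    ∃ θW : F.obj W ≅ W, ∀ n, F.map (u n) ≫ θW.hom = (θ n).hom ≫ u n := by
  have hFu := isColimitCofanMkObjOfIsColimit F X u hu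
  have f1 : ∀ n, F.map (u n) ≫ Cofan.IsColimit.desc hFu (fun n => (θ n).hom ≫ u n) =
    (θ n).hom ≫ u n := fun n => Cofan.IsColimit.fac hFu _ n
  have f2 : ∀ n, u n ≫ Cofan.IsColimit.desc hu (fun n => (θ n).inv ≫ F.map (u n)) =
    (θ n).inv ≫ F.map (u n) := fun n => Cofan.IsColimit.fac hu _ n
  refine ⟨⟨Cofan.IsColimit.desc hFu (fun n => (θ n).hom ≫ u n),
    Cofan.IsColimit.desc hu (fun n => (θ n).inv ≫ F.map (u n)), ?_, ?_⟩, f1⟩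
  · refine Cofan.IsColimit.hom_ext hFu _ _ fun n => ?_
    change F.map (u n) ≫ _ ≫ _ = F.map (u n) ≫ _
    rw [reassoc_of% f1, f2]
    simp
  · refine Cofan.IsColimit.hom_ext hu _ _ fun n => ?_
    change u n ≫ _ ≫ _ = u n ≫ _
    rw [reassoc_of% f2, f1]
    simp

lemma exists_iso_prod [PreservesLimitsOfShape (Discrete ℕ) F] {X : ℕ → T} {W : T}
    {u : ∀ n, W ⟶ X n} (hu : IsLimit (Fan.mk W u)) (θ : ∀ n, F.obj (X n) ≅ X n) :
    ∃ θW : F.obj W ≅ W, ∀ n, F.map (u n) ≫ (θ n).hom = θW.hom ≫ u n := by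
  have hFu := isLimitFanMkObjOfIsLimit F X u hu
  have f1 : ∀ n, Fan.IsLimit.lift hu (fun n => F.map (u n) ≫ (θ n).hom) ≫ u n =
    F.map (u n) ≫ (θ n).hom := fun n => Fan.IsLimit.fac hu _ n
  have f2 : ∀ n, Fan.IsLimit.lift hFu (fun n => u n ≫ (θ n).inv) ≫ F.map (u n) =
    u n ≫ (θ n).inv := fun n => Fan.IsLimit.fac hFu _ n
  refine ⟨⟨Fan.IsLimit.lift hu (fun n => F.map (u n) ≫ (θ n).hom),
    Fan.IsLimit.lift hFu (fun n => u n ≫ (θ n).inv), ?_, ?_⟩, fun n => (f1 n).symm⟩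
  · refine Fan.IsLimit.hom_ext hFu _ _ fun n => ?_
    change (_ ≫ _) ≫ F.map (u n) = _ ≫ F.map (u n)
    rw [assoc, f2, reassoc_of% f1]
    simp
  · refine Fan.IsLimit.hom_ext hu _ _ fun n => ?_
    change (_ ≫ _) ≫ u n = _ ≫ u n
    rw [assoc, f1, reassoc_of% f2]
    simp

end Products

/-! ### Brutal truncations of complexes -/

section Brutal

variable {A}

/-- The quotient functor from cochain complexes to the homotopy category `K(A)`. -/
noncomputable abbrev Q : CochainComplex A ℤ ⥤ HomotopyCategory A (ComplexShape.up ℤ) :=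
  HomotopyCategory.quotient A (ComplexShape.up ℤ)

/-- A degreewise split short exact sequence of complexes gives a distinguished triangle
in the homotopy category. -/
lemma exists_triangle_of_split {K L M : CochainComplex A ℤ} (f : K ⟶ L) (g : L ⟶ M)
    (r : ∀ n, L.X n ⟶ K.X n) (s : ∀ n, M.X n ⟶ L.X n)
    (fr : ∀ n, f.f n ≫ r n = 𝟙 _) (sg : ∀ n, s n ≫ g.f n = 𝟙 _)
    (id : ∀ n, r n ≫ f.f n + g.f n ≫ s n = 𝟙 _) :
    ∃ h : Q.obj M ⟶ (Q.obj K)⟦(1 : ℤ)⟧, Triangle.mk (Q.map f) (Q.map g) h ∈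
      distTriang (HomotopyCategory A (ComplexShape.up ℤ)) := by
  have w : f ≫ g = 0 := by
    ext n
    have h := congrArg (fun t => f.f n ≫ t ≫ g.f n) (id n)
    simp only [Preadditive.add_comp, Preadditive.comp_add, assoc, sg, comp_id, id_comp] at h
    rw [← assoc, fr, id_comp] at h
    simpa using h
  let S : ShortComplex (CochainComplex A ℤ) := ShortComplex.mk f g w
  let σ : ∀ n, (S.map (HomologicalComplex.eval A _ n)).Splitting := fun n =>
    { r := r n
      s := s n
      f_r := fr n
      s_g := sg n
      id := id n }
  have key : CochainComplex.trianglehOfDegreewiseSplit S σ ∈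
      distTriang (HomotopyCategory A (ComplexShape.up ℤ)) := by
    rw [HomotopyCategory.distinguished_iff_iso_trianglehOfDegreewiseSplit]
    exact ⟨S, σ, ⟨Iso.refl _⟩⟩
  exact ⟨_, key⟩

open Classical in
/-- The object in degree `i` of the brutal truncation of `K` to the degrees satisfying `p`. -/
noncomputable def subX (K : CochainComplex A ℤ) (p : ℤ → Prop) (i : ℤ) : A :=
  if p i then K.X i else 0

lemma subX_eq (K : CochainComplex A ℤ) (p : ℤ → Prop) (i : ℤ) (h : p i) : subX K p i = K.X i :=
  if_pos h

lemma isZero_subX (K : CochainComplex A ℤ) (p : ℤ → Prop) (i : ℤ) (h : ¬ p i) :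
    IsZero (subX K p i) := by
  rw [subX, if_neg h]; exact isZero_zero _

open Classical in
/-- The inclusion of `subX K p i` into `K.X i` (an isomorphism or zero). -/
noncomputable def subι (K : CochainComplex A ℤ) (p : ℤ → Prop) (i : ℤ) : subX K p i ⟶ K.X i :=
  if h : p i then eqToHom (subX_eq K p i h) else 0

open Classical in
/-- The projection of `K.X i` onto `subX K p i` (an isomorphism or zero). -/
noncomputable def subπ (K : CochainComplex A ℤ) (p : ℤ → Prop) (i : ℤ) : K.X i ⟶ subX K p i :=
  if h : p i then eqToHom (subX_eq K p i h).symm else 0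

variable (K : CochainComplex A ℤ) (p q r : ℤ → Prop) (i : ℤ)

lemma subπ_subι (h : p i) : subπ K p i ≫ subι K p i = 𝟙 _ := by simp [subι, subπ, h]

/-- The brutal truncation of `K` to the degrees satisfying `p`: it agrees with `K` in these
degrees and vanishes elsewhere. -/
noncomputable def sub : CochainComplex A ℤ where
  X i := subX K p i
  d i j := subι K p i ≫ K.d i j ≫ subπ K p j
  shape i j h := by rw [K.shape i j h, zero_comp, comp_zero]
  d_comp_d' i j k _ _ := by
    by_cases h : p j
    · simp [reassoc_of% (subπ_subι K p j h)]
    · simp [show subι K p j = 0 from dif_neg h]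

/-- The degreewise inclusion of the truncation `sub K p` into `K`. -/
noncomputable def ι : (sub K p).X i ⟶ K.X i := subι K p i

/-- The degreewise projection of `K` onto the truncation `sub K p`. -/
noncomputable def π : K.X i ⟶ (sub K p).X i := subπ K p i

lemma isZero_sub (h : ¬ p i) : IsZero ((sub K p).X i) := isZero_subX K p i h

lemma ι_eq_zero (h : ¬ p i) : ι K p i = 0 := dif_neg h

lemma π_eq_zero (h : ¬ p i) : π K p i = 0 := dif_neg h

lemma π_ι (h : p i) : π K p i ≫ ι K p i = 𝟙 _ := subπ_subι K p i h

lemma π_ι_assoc (h : p i) {Z : A} (f : K.X i ⟶ Z) : π K p i ≫ ι K p i ≫ f = f := by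
  rw [← assoc, π_ι K p i h, id_comp]

@[simp]
lemma ι_π : ι K p i ≫ π K p i = 𝟙 _ := by
  by_cases h : p i
  · have : subι K p i ≫ subπ K p i = 𝟙 _ := by simp [subι, subπ, h]
    exact this
  · exact (isZero_subX K p i h).eq_of_src _ _

@[simp]
lemma ι_π_assoc {Z : A} (f : (sub K p).X i ⟶ Z) : ι K p i ≫ π K p i ≫ f = f := by
  rw [← assoc, ι_π, id_comp]

lemma sub_d (i j : ℤ) : (sub K p).d i j = ι K p i ≫ K.d i j ≫ π K p j := rfl

/-- The comparison morphism between brutal truncations, induced by the identity in the common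
degrees. The hypothesis says that it commutes with each differential from a degree in `p` to a
degree in `q`. -/
noncomputable def tr (h : ∀ i, p i → q (i + 1) → (p (i + 1) ↔ q i)) : sub K p ⟶ sub K q where
  f i := ι K p i ≫ π K q i
  comm' i j hij := by
    obtain rfl : i + 1 = j := hij
    rw [sub_d, sub_d]
    by_cases h₁ : p i
    · by_cases h₂ : q (i + 1)
      · by_cases h₃ : q i
        · simp [π_ι_assoc K q i h₃, π_ι_assoc K p (i + 1) ((h i h₁ h₂).2 h₃)]
        · simp [π_eq_zero K q i h₃, π_eq_zero K p (i + 1) (fun h₄ => h₃ ((h i h₁ h₂).1 h₄))]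
      · simp [π_eq_zero K q _ h₂]
    · simp [ι_eq_zero K p _ h₁]

variable {p q r}

lemma tr_f (h : ∀ i, p i → q (i + 1) → (p (i + 1) ↔ q i)) :
    (tr K p q h).f i = ι K p i ≫ π K q i := rfl

lemma tr_comp (h : ∀ i, p i → q (i + 1) → (p (i + 1) ↔ q i))
    (h' : ∀ i, q i → r (i + 1) → (q (i + 1) ↔ r i))
    (h'' : ∀ i, p i → r (i + 1) → (p (i + 1) ↔ r i)) (hq : ∀ i, p i → r i → q i) :
    tr K p q h ≫ tr K q r h' = tr K p r h'' := by
  ext i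
  rw [HomologicalComplex.comp_f, tr_f, tr_f, tr_f]
  by_cases hp : p i
  · by_cases hr : r i
    · simp [π_ι_assoc K q i (hq i hp hr)]
    · simp [π_eq_zero K r i hr]
  · simp [ι_eq_zero K p i hp]

/-- The truncation triangle `sub K q ⟶ sub K p ⟶ sub K r ⟶` when the set of degrees `p` is the
disjoint union of `q` and `r`, with no differential going from `q` to `r`. -/
lemma exists_trunc_triangle (hqp : ∀ i, q i → p (i + 1) → (q (i + 1) ↔ p i))
    (hpr : ∀ i, p i → r (i + 1) → (p (i + 1) ↔ r i))
    (h : ∀ i, p i ↔ (q i ∨ r i)) (h' : ∀ i, q i → ¬ r i) :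
    ∃ t, Triangle.mk (Q.map (tr K q p hqp)) (Q.map (tr K p r hpr)) t ∈
      distTriang (HomotopyCategory A (ComplexShape.up ℤ)) := by
  refine exists_triangle_of_split _ _ (fun n => ι K p n ≫ π K q n) (fun n => ι K r n ≫ π K p n)
    ?_ ?_ ?_ <;> intro n <;> simp only [tr_f]
  · by_cases hq : q n
    · simp [π_ι_assoc K p n ((h n).2 (Or.inl hq))]
    · exact (isZero_sub K q n hq).eq_of_src _ _
  · by_cases hr : r n
    · simp [π_ι_assoc K p n ((h n).2 (Or.inr hr))]
    · exact (isZero_sub K r n hr).eq_of_src _ _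
  · by_cases hp : p n
    · rcases (h n).1 hp with hq | hr
      · simp [π_ι_assoc K q n hq, ι_eq_zero K r n (h' n hq)]
      · have hq : ¬ q n := fun hq => h' n hq hr
        simp [π_ι_assoc K r n hr, ι_eq_zero K q n hq]
    · exact (isZero_sub K p n hp).eq_of_src _ _

/-- The truncation to all degrees is the complex itself. -/
noncomputable def subTop (h : ∀ i, p i) : sub K p ≅ K :=
  HomologicalComplex.Hom.isoOfComponents
    (fun i => ⟨ι K p i, π K p i, ι_π K p i, π_ι K p i (h i)⟩) (by
      intro i j _
      rw [sub_d]
      simp [π_ι K p j (h j)])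

/-! ### Supports -/

/-- `X` is isomorphic in `K(A)` to a complex concentrated in the degrees satisfying `s`. -/
def Sup (s : ℤ → Prop) (X : HomotopyCategory A (ComplexShape.up ℤ)) : Prop :=
  ∃ K : CochainComplex A ℤ, (∀ n : ℤ, ¬ s n → IsZero (K.X n)) ∧ Nonempty (X ≅ Q.obj K)

lemma Sup.mono {s t : ℤ → Prop} {X : HomotopyCategory A (ComplexShape.up ℤ)} (h : Sup s X)
    (hst : ∀ i, s i → t i) : Sup t X := by
  obtain ⟨K, hK, e⟩ := h
  exact ⟨K, fun n hn => hK n (fun hs => hn (hst n hs)), e⟩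

lemma Sup.of_iso {s : ℤ → Prop} {X Y : HomotopyCategory A (ComplexShape.up ℤ)} (h : Sup s X)
    (e : X ≅ Y) : Sup s Y := by
  obtain ⟨K, hK, ⟨e'⟩⟩ := h
  exact ⟨K, hK, ⟨e.symm ≪≫ e'⟩⟩

lemma Sup.sub (p : ℤ → Prop) : Sup p (Q.obj (sub K p)) :=
  ⟨_, fun n hn => isZero_sub K p n hn, ⟨Iso.refl _⟩⟩

lemma Sup.shift {s : ℤ → Prop} {X : HomotopyCategory A (ComplexShape.up ℤ)} (h : Sup s X)
    (n : ℤ) : Sup (fun i => s (i + n)) (X⟦n⟧) := by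
  obtain ⟨K, hK, ⟨e⟩⟩ := h
  exact ⟨K⟦n⟧, fun i hi => hK (i + n) hi,
    ⟨(CategoryTheory.shiftFunctor _ n).mapIso e ≪≫ ((Q.commShiftIso n).app K).symm⟩⟩

/-- There are no nonzero morphisms between objects with disjoint supports. -/
lemma Sup.eq_zero {s t : ℤ → Prop} {X Y : HomotopyCategory A (ComplexShape.up ℤ)}
    (hX : Sup s X) (hY : Sup t Y) (h : ∀ i, s i → ¬ t i) (f : X ⟶ Y) : f = 0 := by
  obtain ⟨K, hK, ⟨e⟩⟩ := hX
  obtain ⟨L, hL, ⟨e'⟩⟩ := hY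
  obtain ⟨g, hg⟩ := Q.map_surjective (e.inv ≫ f ≫ e'.hom)
  have hg0 : g = 0 := by
    ext i
    by_cases hi : s i
    · exact (hL i (h i hi)).eq_of_tgt _ _
    · exact (hK i hi).eq_of_src _ _
  rw [hg0, Functor.map_zero] at hg
  have : f = e.hom ≫ (e.inv ≫ f ≫ e'.hom) ≫ e'.inv := by simp
  rw [this, ← hg, zero_comp, comp_zero]

end Brutal

/-! ### Countable coproducts and products in the homotopy category -/

section Coproducts

variable {A}

section

variable [HasCoproductsOfShape ℕ A] (K : ℕ → CochainComplex A ℤ)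

/-- The degreewise coproduct of a sequence of complexes. -/
noncomputable def coprodC : CochainComplex A ℤ where
  X i := ∐ fun n => (K n).X i
  d i j := Limits.Sigma.map (fun n => (K n).d i j)
  shape i j h := by
    refine Limits.Sigma.hom_ext _ _ (fun n => ?_)
    simp [(K n).shape i j h]
  d_comp_d' i j k _ _ := by
    refine Limits.Sigma.hom_ext _ _ (fun n => ?_)
    simp

/-- The inclusions into the coproduct of complexes. -/
noncomputable def inC (n : ℕ) : K n ⟶ coprodC K where
  f i := Sigma.ι (fun n => (K n).X i) n
  comm' i j _ := Sigma.ι_map (fun n => (K n).d i j) n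

variable {K}

lemma coprodC_ext {i : ℤ} {Z : A} {f g : (coprodC K).X i ⟶ Z}
    (h : ∀ n, (inC K n).f i ≫ f = (inC K n).f i ≫ g) : f = g :=
  Limits.Sigma.hom_ext _ _ h

/-- Degreewise construction of morphisms out of a coproduct of complexes. -/
noncomputable def descX {i : ℤ} {Z : A} (f : ∀ n, (K n).X i ⟶ Z) : (coprodC K).X i ⟶ Z :=
  Sigma.desc f

@[simp]
lemma inC_descX {i : ℤ} {Z : A} (f : ∀ n, (K n).X i ⟶ Z) (n : ℕ) :
    (inC K n).f i ≫ descX f = f n :=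
  Sigma.ι_desc _ _

@[simp]
lemma inC_descX_assoc {i : ℤ} {Z Z' : A} (f : ∀ n, (K n).X i ⟶ Z) (n : ℕ) (g : Z ⟶ Z') :
    (inC K n).f i ≫ descX f ≫ g = f n ≫ g := by
  rw [← assoc, inC_descX]

/-- The universal property of the coproduct of complexes. -/
noncomputable def descC {L : CochainComplex A ℤ} (f : ∀ n, K n ⟶ L) : coprodC K ⟶ L where
  f i := descX (fun n => (f n).f i)
  comm' i j _ := by
    refine coprodC_ext (fun n => ?_)
    rw [inC_descX_assoc, (f n).comm, ← assoc, HomologicalComplex.Hom.comm, assoc, inC_descX]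

@[simp]
lemma inC_descC {L : CochainComplex A ℤ} (f : ∀ n, K n ⟶ L) (n : ℕ) :
    inC K n ≫ descC f = f n := by
  ext i
  exact inC_descX _ _

lemma inC_descC_f {L : CochainComplex A ℤ} (f : ∀ n, K n ⟶ L) (n : ℕ) (i : ℤ) :
    (inC K n).f i ≫ (descC f).f i = (f n).f i := inC_descX _ _

lemma inC_descC_f_assoc {L : CochainComplex A ℤ} (f : ∀ n, K n ⟶ L) (n : ℕ) (i : ℤ) {Z : A}
    (g : L.X i ⟶ Z) : (inC K n).f i ≫ (descC f).f i ≫ g = (f n).f i ≫ g := by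
  rw [← assoc, inC_descC_f]

/-- Homotopies may be assembled along a coproduct. -/
noncomputable def homotopyCoprod {L : CochainComplex A ℤ} {f g : coprodC K ⟶ L}
    (h : ∀ n, Homotopy (inC K n ≫ f) (inC K n ≫ g)) : Homotopy f g where
  hom i j := descX (fun n => (h n).hom i j)
  zero i j hij := coprodC_ext (fun n => by rw [inC_descX, (h n).zero i j hij, comp_zero])
  comm i := by
    refine coprodC_ext (fun n => ?_)
    have e : (h n).hom = fun i j => (inC K n).f i ≫ descX (fun n => (h n).hom i j) := by
      ext i j; rw [inC_descX]
    have := (h n).comm i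
    rw [e, dNext_comp_left, prevD_comp_left] at this
    simpa only [HomologicalComplex.comp_f, Preadditive.comp_add] using this

/-- The degreewise coproduct is a coproduct in the homotopy category. -/
noncomputable def isColimitCoprod (K : ℕ → CochainComplex A ℤ) :
    IsColimit (Cofan.mk (Q.obj (coprodC K)) (fun n => Q.map (inC K n))) :=
  Cofan.IsColimit.mk _
    (fun s => Q.map (descC (L := s.pt.as) (fun n => Q.preimage (s.inj n))))
    (fun s n => by
      change Q.map _ ≫ Q.map _ = _
      rw [← Functor.map_comp, inC_descC]
      exact Q.map_preimage _)
    (fun s m hm => by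
      obtain ⟨m', rfl⟩ : ∃ m' : coprodC K ⟶ s.pt.as, Q.map m' = m := Q.map_surjective m
      refine HomotopyCategory.eq_of_homotopy _ _ (homotopyCoprod (fun n => ?_))
      refine HomotopyCategory.homotopyOfEq _ _ ?_
      rw [inC_descC]
      erw [Q.map_preimage]
      rw [← hm n, Functor.map_comp]
      rfl)

end

section

variable [HasProductsOfShape ℕ A] (K : ℕ → CochainComplex A ℤ)

/-- The degreewise product of a sequence of complexes. -/
noncomputable def prodC : CochainComplex A ℤ where
  X i := ∏ᶜ fun n => (K n).X i
  d i j := Limits.Pi.map (fun n => (K n).d i j)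
  shape i j h := by
    refine Limits.Pi.hom_ext _ _ (fun n => ?_)
    simp [(K n).shape i j h]
  d_comp_d' i j k _ _ := by
    refine Limits.Pi.hom_ext _ _ (fun n => ?_)
    simp

/-- The projections from the product of complexes. -/
noncomputable def outC (n : ℕ) : prodC K ⟶ K n where
  f i := Pi.π (fun n => (K n).X i) n
  comm' i j _ := (Pi.map_π (fun n => (K n).d i j) n).symm

variable {K}

lemma prodC_ext {i : ℤ} {Z : A} {f g : Z ⟶ (prodC K).X i}
    (h : ∀ n, f ≫ (outC K n).f i = g ≫ (outC K n).f i) : f = g :=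
  Limits.Pi.hom_ext _ _ h

/-- Degreewise construction of morphisms into a product of complexes. -/
noncomputable def liftX {i : ℤ} {Z : A} (f : ∀ n, Z ⟶ (K n).X i) : Z ⟶ (prodC K).X i :=
  Pi.lift f

@[simp]
lemma liftX_outC {i : ℤ} {Z : A} (f : ∀ n, Z ⟶ (K n).X i) (n : ℕ) :
    liftX f ≫ (outC K n).f i = f n :=
  Pi.lift_π _ _

/-- The universal property of the product of complexes. -/
noncomputable def liftC {L : CochainComplex A ℤ} (f : ∀ n, L ⟶ K n) : L ⟶ prodC K where
  f i := liftX (fun n => (f n).f i)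
  comm' i j _ := by
    refine prodC_ext (fun n => ?_)
    rw [assoc, assoc, liftX_outC, ← (f n).comm, ← HomologicalComplex.Hom.comm, ← assoc, liftX_outC]

@[simp]
lemma liftC_outC {L : CochainComplex A ℤ} (f : ∀ n, L ⟶ K n) (n : ℕ) :
    liftC f ≫ outC K n = f n := by
  ext i
  exact liftX_outC _ _

lemma liftC_outC_f {L : CochainComplex A ℤ} (f : ∀ n, L ⟶ K n) (n : ℕ) (i : ℤ) :
    (liftC f).f i ≫ (outC K n).f i = (f n).f i := liftX_outC _ _

/-- Homotopies may be assembled along a product. -/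
noncomputable def homotopyProd {L : CochainComplex A ℤ} {f g : L ⟶ prodC K}
    (h : ∀ n, Homotopy (f ≫ outC K n) (g ≫ outC K n)) : Homotopy f g where
  hom i j := liftX (fun n => (h n).hom i j)
  zero i j hij := prodC_ext (fun n => by rw [liftX_outC, (h n).zero i j hij, zero_comp])
  comm i := by
    refine prodC_ext (fun n => ?_)
    have e : (h n).hom = fun i j => liftX (fun n => (h n).hom i j) ≫ (outC K n).f j := by
      ext i j; rw [liftX_outC]
    have := (h n).comm i
    rw [e, dNext_comp_right, prevD_comp_right] at this
    simpa only [HomologicalComplex.comp_f, Preadditive.add_comp] using this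

/-- The degreewise product is a product in the homotopy category. -/
noncomputable def isLimitProd (K : ℕ → CochainComplex A ℤ) :
    IsLimit (Fan.mk (Q.obj (prodC K)) (fun n => Q.map (outC K n))) :=
  Fan.IsLimit.mk _
    (fun s => Q.map (liftC (L := s.pt.as) (fun n => Q.preimage (s.proj n))))
    (fun s n => by
      change Q.map _ ≫ Q.map _ = _
      rw [← Functor.map_comp, liftC_outC]
      exact Q.map_preimage _)
    (fun s m hm => by
      obtain ⟨m', rfl⟩ : ∃ m' : s.pt.as ⟶ prodC K, Q.map m' = m := Q.map_surjective m
      refine HomotopyCategory.eq_of_homotopy _ _ (homotopyProd (fun n => ?_))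
      refine HomotopyCategory.homotopyOfEq _ _ ?_
      rw [liftC_outC]
      erw [Q.map_preimage]
      rw [← hm n, Functor.map_comp]
      rfl)

end

end Coproducts

/-! ### Complexes as homotopy colimits and limits of brutal truncations -/

section Telescope

variable {A}

lemma sum_telescope {G : Type*} [AddCommGroup G] (a c : ℕ → G) (N m : ℕ) (hm : N ≤ m)
    (h : ∀ k, N ≤ k → c k = a k - a (k + 1)) (h' : ∀ k, k < N → c k = 0) :
    ∑ k ∈ Finset.range m, c k = a N - a m := by
  induction m, hm using Nat.le_induction with
  | base =>
    rw [sub_self]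
    exact Finset.sum_eq_zero (fun k hk => h' k (Finset.mem_range.1 hk))
  | succ m hm ih =>
    rw [Finset.sum_range_succ, ih, h m hm]
    abel

variable (K : CochainComplex A ℤ) {P : ℤ → Prop} {p : ℕ → ℤ → Prop}

lemma mono_of_succ (hp : ∀ n i, p n i → p (n + 1) i) {m n : ℕ} (h : m ≤ n) (i : ℤ)
    (hi : p m i) : p n i := by
  induction n, h using Nat.le_induction with
  | base => exact hi
  | succ n _ ih => exact hp _ _ ih

lemma ι_trans {q q' q'' : ℤ → Prop} (i : ℤ) (h : q i → q'' i → q' i) :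
    ι K q i ≫ π K q' i ≫ ι K q' i ≫ π K q'' i = ι K q i ≫ π K q'' i := by
  by_cases hq : q i
  · by_cases hq'' : q'' i
    · rw [π_ι_assoc K q' i (h hq hq'')]
    · simp [π_eq_zero K q'' i hq'']
  · simp [ι_eq_zero K q i hq]

lemma ι_trans_assoc {q q' q'' : ℤ → Prop} (i : ℤ) (h : q i → q'' i → q' i) {Z : A}
    (f : (sub K q'').X i ⟶ Z) :
    ι K q i ≫ π K q' i ≫ ι K q' i ≫ π K q'' i ≫ f = ι K q i ≫ π K q'' i ≫ f := by
  have := congrArg (· ≫ f) (ι_trans K i h)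
  simpa only [assoc] using this

/-- If `sub K P` is the increasing union of subcomplexes `sub K (p n)`, it is their homotopy
colimit: there is a triangle `∐ sub K (p n) ⟶ ∐ sub K (p n) ⟶ sub K P ⟶`. -/
lemma exists_hocolim_triangle [HasCoproductsOfShape ℕ A]
    (hp : ∀ n i, p n i → p (n + 1) i) (hex : ∀ i, P i → ∃ n, p n i)
    (ht : ∀ n i, p n i → p (n + 1) (i + 1) → (p n (i + 1) ↔ p (n + 1) i))
    (hP : ∀ n i, p n i → P (i + 1) → (p n (i + 1) ↔ P i)) (hpP : ∀ n i, p n i → P i) :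
    ∃ t, Triangle.mk
      (Q.map (descC (fun n => inC (fun n => sub K (p n)) n -
        tr K (p n) (p (n + 1)) (ht n) ≫ inC (fun n => sub K (p n)) (n + 1))))
      (Q.map (descC (fun n => tr K (p n) P (hP n)))) t ∈
      distTriang (HomotopyCategory A (ComplexShape.up ℤ)) := by
  classical
  -- `N i` is the first stage containing degree `i`; in degree `i` the truncations `sub K (p k)`
  -- are `K.X i` for `k ≥ N i` and zero for `k < N i`, which makes the sequence split.
  let N : ℤ → ℕ := fun i => if h : P i then Nat.find (hex i h) else 0
  have hN : ∀ i, P i → p (N i) i := fun i h => by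
    simp only [N, dif_pos h]; exact Nat.find_spec (hex i h)
  have hN' : ∀ i k, P i → k < N i → ¬ p k i := fun i k h hk => by
    simp only [N, dif_pos h] at hk; exact Nat.find_min (hex i h) hk
  let u := inC (fun n => sub K (p n))
  refine exists_triangle_of_split _ _
    (fun i => descX (fun n => - ∑ k ∈ Finset.range n, ι K (p n) i ≫ π K (p k) i ≫ (u k).f i))
    (fun i => ι K P i ≫ π K (p (N i)) i ≫ (u (N i)).f i) ?_ ?_ ?_
  · intro i
    refine coprodC_ext (fun n => ?_)
    rw [inC_descC_f_assoc, HomologicalComplex.sub_f_apply, HomologicalComplex.comp_f,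
      Preadditive.sub_comp, assoc, inC_descX, inC_descX, comp_id, tr_f]
    simp only [Preadditive.comp_neg, Preadditive.comp_sum, assoc]
    have : ∀ k, ι K (p n) i ≫ π K (p (n + 1)) i ≫ ι K (p (n + 1)) i ≫ π K (p k) i ≫ (u k).f i =
        ι K (p n) i ≫ π K (p k) i ≫ (u k).f i := fun k =>
      ι_trans_assoc K i (fun h _ => hp _ _ h) _
    simp only [this, Finset.sum_range_succ, ι_π_assoc]
    abel
  · intro i
    rw [assoc, assoc, inC_descC_f, tr_f]
    by_cases h : P i
    · rw [π_ι_assoc K _ i (hN i h), ι_π]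
    · exact (isZero_sub K P i h).eq_of_src _ _
  · intro i
    refine coprodC_ext (fun n => ?_)
    rw [Preadditive.comp_add, inC_descX_assoc, inC_descC_f_assoc, tr_f, comp_id]
    by_cases h : p n i
    · have hPi := hpP n i h
      have hNn : N i ≤ n := by
        by_contra hlt
        exact hN' i n hPi (by omega) h
      have key := sum_telescope (fun k => ι K (p n) i ≫ π K (p k) i ≫ (u k).f i)
        (fun k => ι K (p n) i ≫ π K (p k) i ≫ ((u k).f i -
          ι K (p k) i ≫ π K (p (k + 1)) i ≫ (u (k + 1)).f i)) (N i) n hNn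
        (fun k hk => by
          have hk' : p k i := mono_of_succ hp hk i (hN i hPi)
          simp only [Preadditive.comp_sub, π_ι_assoc K _ i hk'])
        (fun k hk => by
          have hk' := hN' i k hPi hk
          simp [π_eq_zero K _ i hk'])
      simp only [Preadditive.neg_comp, Preadditive.sum_comp, assoc]
      have e : ∀ k, (u k).f i ≫ (descC (fun n => inC (fun n => sub K (p n)) n -
        tr K (p n) (p (n + 1)) (ht n) ≫ inC (fun n => sub K (p n)) (n + 1))).f i =
          (u k).f i - ι K (p k) i ≫ π K (p (k + 1)) i ≫ (u (k + 1)).f i := by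
        intro k
        rw [inC_descC_f, HomologicalComplex.sub_f_apply, HomologicalComplex.comp_f, tr_f, assoc]
      simp only [e]
      rw [key, π_ι_assoc K P i hPi, ι_π_assoc]
      abel
    · exact (isZero_sub K (p n) i h).eq_of_src _ _

/-- If `sub K P` is the inverse limit of its quotients `sub K (p n)`, it is their homotopy
limit: there is a triangle `sub K P ⟶ ∏ sub K (p n) ⟶ ∏ sub K (p n) ⟶`. -/
lemma exists_holim_triangle [HasProductsOfShape ℕ A]
    (hp : ∀ n i, p n i → p (n + 1) i) (hex : ∀ i, P i → ∃ n, p n i)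
    (ht : ∀ n i, p (n + 1) i → p n (i + 1) → (p (n + 1) (i + 1) ↔ p n i))
    (hP : ∀ n i, P i → p n (i + 1) → (P (i + 1) ↔ p n i)) (hpP : ∀ n i, p n i → P i) :
    ∃ t, Triangle.mk
      (Q.map (liftC (fun n => tr K P (p n) (hP n))))
      (Q.map (liftC (fun n => outC (fun n => sub K (p n)) n -
        outC (fun n => sub K (p n)) (n + 1) ≫ tr K (p (n + 1)) (p n) (ht n)))) t ∈
      distTriang (HomotopyCategory A (ComplexShape.up ℤ)) := by
  classical
  -- `N i` is the first stage containing degree `i`; in degree `i` the truncations `sub K (p k)`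
  -- are `K.X i` for `k ≥ N i` and zero for `k < N i`, which makes the sequence split.
  let N : ℤ → ℕ := fun i => if h : P i then Nat.find (hex i h) else 0
  have hN : ∀ i, P i → p (N i) i := fun i h => by
    simp only [N, dif_pos h]; exact Nat.find_spec (hex i h)
  have hN' : ∀ i k, P i → k < N i → ¬ p k i := fun i k h hk => by
    simp only [N, dif_pos h] at hk; exact Nat.find_min (hex i h) hk
  let u := outC (fun n => sub K (p n))
  refine exists_triangle_of_split _ _
    (fun i => (u (N i)).f i ≫ ι K (p (N i)) i ≫ π K P i)
    (fun i => liftX (fun n => - ∑ k ∈ Finset.range n, (u k).f i ≫ ι K (p k) i ≫ π K (p n) i))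
    ?_ ?_ ?_
  · intro i
    rw [← assoc, liftC_outC_f, tr_f, assoc]
    by_cases h : P i
    · rw [π_ι_assoc K _ i (hN i h), ι_π]
    · exact (isZero_sub K P i h).eq_of_src _ _
  · intro i
    refine prodC_ext (fun n => ?_)
    rw [assoc, liftC_outC_f, HomologicalComplex.sub_f_apply, HomologicalComplex.comp_f,
      Preadditive.comp_sub, ← assoc, liftX_outC, liftX_outC, id_comp, tr_f]
    simp only [Preadditive.neg_comp, Preadditive.sum_comp, assoc]
    have : ∀ k, ι K (p k) i ≫ π K (p (n + 1)) i ≫ ι K (p (n + 1)) i ≫ π K (p n) i =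
        ι K (p k) i ≫ π K (p n) i := fun k =>
      ι_trans K i (fun _ h => hp _ _ h)
    simp only [this, Finset.sum_range_succ, ι_π, comp_id]
    abel
  · intro i
    refine prodC_ext (fun n => ?_)
    rw [Preadditive.add_comp, assoc, assoc, assoc, assoc, liftC_outC_f, liftX_outC, tr_f, id_comp]
    by_cases h : p n i
    · have hPi := hpP n i h
      have hNn : N i ≤ n := by
        by_contra hlt
        exact hN' i n hPi (by omega) h
      have key := sum_telescope (fun k => (u k).f i ≫ ι K (p k) i ≫ π K (p n) i)
        (fun k => ((u k).f i - (u (k + 1)).f i ≫ ι K (p (k + 1)) i ≫ π K (p k) i) ≫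
          ι K (p k) i ≫ π K (p n) i) (N i) n hNn
        (fun k hk => by
          have hk' : p k i := mono_of_succ hp hk i (hN i hPi)
          simp only [Preadditive.sub_comp, assoc, π_ι_assoc K _ i hk'])
        (fun k hk => by
          have hk' := hN' i k hPi hk
          simp [ι_eq_zero K _ i hk'])
      simp only [Preadditive.comp_neg, Preadditive.comp_sum]
      have e : ∀ k, (liftC (fun n => outC (fun n => sub K (p n)) n -
        outC (fun n => sub K (p n)) (n + 1) ≫ tr K (p (n + 1)) (p n) (ht n))).f i ≫ (u k).f i =
          (u k).f i - (u (k + 1)).f i ≫ ι K (p (k + 1)) i ≫ π K (p k) i := by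
        intro k
        rw [liftC_outC_f, HomologicalComplex.sub_f_apply, HomologicalComplex.comp_f, tr_f]
      have e' : ∀ k {Z : A} (f : _ ⟶ Z), (liftC (fun n => outC (fun n => sub K (p n)) n -
        outC (fun n => sub K (p n)) (n + 1) ≫ tr K (p (n + 1)) (p n) (ht n))).f i ≫ (u k).f i ≫ f =
          ((u k).f i - (u (k + 1)).f i ≫ ι K (p (k + 1)) i ≫ π K (p k) i) ≫ f := by
        intro k Z f
        rw [← e, assoc]
      simp only [e']
      rw [key, π_ι_assoc K P i hPi, ι_π, comp_id]
      abel
    · exact (isZero_sub K (p n) i h).eq_of_tgt _ _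

end Telescope

/-! ### The isomorphisms on the core and on shifted stalk complexes -/

section Unshift

variable (F : T ⥤ T) [F.CommShift ℤ]

/-- The isomorphism `F.obj X ≅ X` obtained by desuspending an isomorphism
`F.obj (X⟦n⟧) ≅ X⟦n⟧`. -/
noncomputable def unshift (n : ℤ) {X : T} (a : F.obj (X⟦n⟧) ≅ X⟦n⟧) : F.obj X ≅ X :=
  (shiftFunctor T n).preimageIso (((F.commShiftIso n).app X).symm ≪≫ a)

lemma unshift_map (n : ℤ) {X : T} (a : F.obj (X⟦n⟧) ≅ X⟦n⟧) :
    (unshift F n a).hom⟦n⟧' = (F.commShiftIso n).inv.app X ≫ a.hom :=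
  (shiftFunctor T n).map_preimage _

lemma unshift_naturality (n : ℤ) {X Y : T} (a : F.obj (X⟦n⟧) ≅ X⟦n⟧) (b : F.obj (Y⟦n⟧) ≅ Y⟦n⟧)
    (f : X ⟶ Y) (h : F.map (f⟦n⟧') ≫ b.hom = a.hom ≫ f⟦n⟧') :
    F.map f ≫ (unshift F n b).hom = (unshift F n a).hom ≫ f := by
  apply (shiftFunctor T n).map_injective
  rw [Functor.map_comp, Functor.map_comp, unshift_map, unshift_map, assoc, ← h]
  rw [← assoc, ← assoc]
  congr 1
  exact ((F.commShiftIso n).inv.naturality f)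

lemma unshift_shift (n m : ℤ) (hm : 1 + n = m) {Y : T} (b : F.obj (Y⟦(1 : ℤ)⟧⟦n⟧) ≅ Y⟦(1 : ℤ)⟧⟦n⟧)
    (b' : F.obj (Y⟦m⟧) ≅ Y⟦m⟧)
    (h : F.map ((shiftFunctorAdd' T 1 n m hm).hom.app Y) ≫ b.hom =
      b'.hom ≫ (shiftFunctorAdd' T 1 n m hm).hom.app Y) :
    (unshift F n b).hom = (F.commShiftIso (1 : ℤ)).hom.app Y ≫ (unshift F m b').hom⟦(1 : ℤ)⟧' := by
  apply (shiftFunctor T n).map_injective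
  rw [Functor.map_comp, unshift_map]
  have h₁ := (shiftFunctorAdd' T 1 n m hm).hom.naturality (unshift F m b').hom
  rw [unshift_map] at h₁
  have h₂ : ((unshift F m b').hom⟦(1 : ℤ)⟧')⟦n⟧' =
      (shiftFunctorAdd' T 1 n m hm).inv.app _ ≫ ((F.commShiftIso m).inv.app Y ≫ b'.hom) ≫
        (shiftFunctorAdd' T 1 n m hm).hom.app Y := by
    rw [h₁]
    simp
  rw [h₂, assoc, ← h]
  have h₃ : (F.commShiftIso m).hom.app Y = _ :=
    congrArg (fun t => t.hom.app Y) (F.commShiftIso_add' hm)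
  rw [Functor.CommShift.isoAdd'_hom_app] at h₃
  have h₄ : F.map ((shiftFunctorAdd' T 1 n m hm).hom.app Y) =
    (F.commShiftIso m).hom.app Y ≫ (shiftFunctorAdd' T 1 n m hm).hom.app (F.obj Y) ≫
      ((F.commShiftIso (1 : ℤ)).inv.app Y)⟦n⟧' ≫ (F.commShiftIso n).inv.app (Y⟦(1 : ℤ)⟧) := by
    rw [h₃]
    simp only [assoc, Iso.inv_hom_id_app_assoc]
    rw [← Functor.map_comp_assoc]
    simp
  rw [h₄]
  simp only [assoc, Iso.inv_hom_id_app_assoc]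
  rw [← Functor.map_comp_assoc]
  simp

end Unshift

section Core

variable {A}

instance : (stalkK A).Full := by unfold stalkK; infer_instance

lemma Sup.core {X : HomotopyCategory A (ComplexShape.up ℤ)} (h : Sup (fun i => i = 0) X) :
    X ∈ coreSet (Kge A) (Kle A) := by
  obtain ⟨K, hK, e⟩ := h
  exact ⟨⟨K, fun n hn => hK n (by omega), e⟩, ⟨K, fun n hn => hK n (by omega), e⟩⟩

/-- Every object of the core is a retract of a stalk complex: the brutal truncation triangle of
a complex in non-positive degrees splits. -/
lemma exists_retract {X : HomotopyCategory A (ComplexShape.up ℤ)}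
    (hX : X ∈ coreSet (Kge A) (Kle A)) :
    ∃ (M : A) (i : X ⟶ (stalkK A).obj M) (r : (stalkK A).obj M ⟶ X), i ≫ r = 𝟙 X := by
  obtain ⟨⟨K, hK, eK⟩, ⟨L, hL, ⟨e⟩⟩⟩ := hX
  have hX : Sup (fun i => 0 ≤ i) X := ⟨K, fun n hn => hK n (by omega), eK⟩
  obtain ⟨t, ht⟩ := exists_trunc_triangle L (p := fun _ => True) (q := fun i => 0 ≤ i)
    (r := fun i => i < 0) (fun i _ _ => by simp; omega) (fun i _ _ => by simp; omega)
    (fun i => by simp; omega) (fun i => by simp)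
  let e' : X ≅ Q.obj (sub L (fun _ => True)) := e ≪≫ Q.mapIso (subTop L (fun _ => trivial)).symm
  obtain ⟨i, j, hi⟩ : ∃ (i : X ⟶ Q.obj (sub L (fun i => 0 ≤ i))) (j : _ ⟶ _), e'.hom = i ≫ j := by
    obtain ⟨i, hi⟩ := coyoneda₂ ht e'.hom
      (hX.eq_zero (Sup.sub L _) (fun i h => by simpa using h) _)
    exact ⟨i, _, hi⟩
  have : (sub L (fun i => 0 ≤ i)).IsStrictlyGE 0 :=
    (CochainComplex.isStrictlyGE_iff _ _).2 (fun i hi => isZero_sub _ _ _ (by omega))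
  have : (sub L (fun i => 0 ≤ i)).IsStrictlyLE 0 :=
    (CochainComplex.isStrictlyLE_iff _ _).2 (fun i hi =>
      have : Mono (ι L (fun i => 0 ≤ i) i) := mono_of_mono_fac (ι_π L _ i)
      (hL i hi).of_mono (ι L (fun i => 0 ≤ i) i))
  obtain ⟨M, ⟨s⟩⟩ := CochainComplex.exists_iso_single (sub L (fun i => 0 ≤ i)) 0
  let s' : Q.obj (sub L (fun i => 0 ≤ i)) ≅ (stalkK A).obj M := Q.mapIso s
  refine ⟨M, i ≫ s'.hom, s'.inv ≫ j ≫ e'.inv, ?_⟩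
  rw [assoc, s'.hom_inv_id_assoc, ← reassoc_of% hi, e'.hom_inv_id]

variable {F : HomotopyCategory A (ComplexShape.up ℤ) ⥤ HomotopyCategory A (ComplexShape.up ℤ)}

/-- The isomorphism `F|_A ≅ id` extends to the core, by passing to retracts. -/
lemma exists_core_iso (E : stalkK A ⋙ F ≅ stalkK A) :
    ∃ ψ : ∀ X : HomotopyCategory A (ComplexShape.up ℤ), X ∈ coreSet (Kge A) (Kle A) →
      (F.obj X ≅ X), ∀ X Y hX hY (f : X ⟶ Y), F.map f ≫ (ψ Y hY).hom = (ψ X hX).hom ≫ f := by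
  have nat : ∀ {M N : A} (g : (stalkK A).obj M ⟶ (stalkK A).obj N),
      F.map g ≫ E.hom.app N = E.hom.app M ≫ g := by
    intro M N g
    obtain ⟨g, rfl⟩ := (stalkK A).map_surjective g
    exact E.hom.naturality g
  have nat' : ∀ {M N : A} (g : (stalkK A).obj M ⟶ (stalkK A).obj N),
      g ≫ E.inv.app N = E.inv.app M ≫ F.map g := by
    intro M N g
    obtain ⟨g, rfl⟩ := (stalkK A).map_surjective g
    exact E.inv.naturality g
  choose M i r hir using fun (X : HomotopyCategory A (ComplexShape.up ℤ))
    (hX : X ∈ coreSet (Kge A) (Kle A)) => exists_retract hX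
  have e₁ : ∀ N, E.hom.app N ≫ E.inv.app N = 𝟙 (F.obj ((stalkK A).obj N)) := fun N =>
    E.hom_inv_id_app N
  have e₂ : ∀ N, E.inv.app N ≫ E.hom.app N = 𝟙 ((stalkK A).obj N) := fun N =>
    E.inv_hom_id_app N
  refine ⟨fun X hX =>
    { hom := F.map (i X hX) ≫ E.hom.app (M X hX) ≫ r X hX
      inv := i X hX ≫ E.inv.app (M X hX) ≫ F.map (r X hX)
      hom_inv_id := ?_
      inv_hom_id := ?_ }, ?_⟩
  · have h := nat' (r X hX ≫ i X hX)
    simp only [assoc] at h ⊢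
    rw [reassoc_of% h, reassoc_of% (e₁ (M X hX)), ← F.map_comp, ← F.map_comp]
    simp [hir]
  · have h := nat (r X hX ≫ i X hX)
    simp only [assoc, F.map_comp] at h ⊢
    rw [reassoc_of% h, reassoc_of% (e₂ (M X hX)), hir, comp_id, hir]
  · intro X Y hX hY f
    have h := nat (r X hX ≫ f ≫ i Y hY)
    have h' : f ≫ i Y hY = i X hX ≫ r X hX ≫ f ≫ i Y hY := by
      rw [← assoc (i X hX), hir, id_comp]
    dsimp only
    rw [← F.map_comp_assoc, h', F.map_comp, assoc, reassoc_of% h]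
    simp only [assoc, hir, comp_id]

/-- A system of isomorphisms `F.obj X ≅ X` for the objects `X` concentrated in one degree, which
is natural, also with respect to morphisms `X ⟶ Y⟦1⟧`. -/
structure StalkIsos (F : HomotopyCategory A (ComplexShape.up ℤ) ⥤
    HomotopyCategory A (ComplexShape.up ℤ)) [F.CommShift ℤ] where
  /-- The isomorphism for objects concentrated in degree `n`. -/
  φ : ∀ (n : ℤ) (X : HomotopyCategory A (ComplexShape.up ℤ)), Sup (fun i => i = n) X →
    (F.obj X ≅ X)
  nat : ∀ n X Y hX hY (f : X ⟶ Y), F.map f ≫ (φ n Y hY).hom = (φ n X hX).hom ≫ f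
  nat_shift : ∀ n m X Y hX hY, n + 1 = m → ∀ (f : X ⟶ Y⟦(1 : ℤ)⟧),
    F.map f ≫ (F.commShiftIso (1 : ℤ)).hom.app Y ≫ (φ m Y hY).hom⟦(1 : ℤ)⟧' =
      (φ n X hX).hom ≫ f

/-- The isomorphisms on the core give, by desuspension, a system of isomorphisms on the objects
concentrated in one degree. -/
lemma nonempty_stalkIsos [F.CommShift ℤ] (E : stalkK A ⋙ F ≅ stalkK A) :
    Nonempty (StalkIsos F) := by
  obtain ⟨ψ, hψ⟩ := exists_core_iso E
  have core : ∀ (n : ℤ) (X : HomotopyCategory A (ComplexShape.up ℤ)), Sup (fun i => i = n) X →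
      X⟦n⟧ ∈ coreSet (Kge A) (Kle A) := fun n X h =>
    ((h.shift n).mono (fun i hi => by omega)).core
  refine ⟨⟨fun n X hX => unshift F n (ψ _ (core n X hX)), ?_, ?_⟩⟩
  · intro n X Y hX hY f
    exact unshift_naturality F n _ _ f (hψ _ _ _ _ _)
  · rintro n _ X Y hX hY rfl f
    have hY' : Sup (fun i => i = n) (Y⟦(1 : ℤ)⟧) := (hY.shift 1).mono (fun i hi => by omega)
    rw [← unshift_shift F n (n + 1) (by omega) (ψ _ (core n _ hY')) _ (hψ _ _ _ _ _)]
    exact unshift_naturality F n _ _ f (hψ _ _ _ _ _)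

end Core

/-! ### An isomorphism `F.obj X ≅ X` for every object -/

/-- Construction of a sequence by recursion, with an invariant `P` and a relation `R` between
consecutive terms. -/
lemma exists_seq {α : ℕ → Type*} (P : ∀ n, α n → Prop) (R : ∀ n, α n → α (n + 1) → Prop)
    (a₀ : α 0) (h₀ : P 0 a₀) (step : ∀ n a, P n a → ∃ b, P (n + 1) b ∧ R n a b) :
    ∃ a : ∀ n, α n, a 0 = a₀ ∧ ∀ n, R n (a n) (a (n + 1)) := by
  choose b hb hR using step
  let s : ∀ n, {a : α n // P n a} := fun n =>
    Nat.rec ⟨a₀, h₀⟩ (fun n a => ⟨b n a.1 a.2, hb n a.1 a.2⟩) n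
  exact ⟨fun n => (s n).1, rfl, fun n => hR n (s n).1 (s n).2⟩

section Squares

variable {F : T ⥤ T} {R X S : T}

/-- The equality `a = θX.hom ≫ b` of morphisms `F.obj X ⟶ Z` may be checked after restriction
along `j : S ⟶ X`, if the cone of `j` has no nonzero morphisms to `Z`. -/
lemma square_left {j : S ⟶ X} {g : X ⟶ R} {h : R ⟶ S⟦(1 : ℤ)⟧}
    (hT : Triangle.mk j g h ∈ distTriang T) {Z : T} (hR : ∀ x : R ⟶ Z, x = 0)
    (θS : F.obj S ≅ S) (θX : F.obj X ≅ X) (hj : F.map j ≫ θX.hom = θS.hom ≫ j)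
    (a : F.obj X ⟶ Z) (b : X ⟶ Z) (hab : F.map j ≫ a = θS.hom ≫ j ≫ b) : a = θX.hom ≫ b := by
  have h₀ : j ≫ (θX.inv ≫ a - b) = 0 := by
    rw [← cancel_epi θS.hom, comp_zero, Preadditive.comp_sub, Preadditive.comp_sub, ← hab,
      ← assoc, ← hj, assoc, θX.hom_inv_id_assoc, sub_self]
  obtain ⟨x, hx⟩ := yoneda₂ hT _ h₀
  rw [hR x, comp_zero, sub_eq_zero] at hx
  rw [← hx, θX.hom_inv_id_assoc]

/-- Equality of morphisms to `X⟦1⟧` may be checked after composition with `X⟦1⟧ ⟶ S⟦1⟧`, if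
there are no nonzero morphisms to the suspension of the fibre. -/
lemma square_right {f : R ⟶ X} {q : X ⟶ S} {h : S ⟶ R⟦(1 : ℤ)⟧}
    (hT : Triangle.mk f q h ∈ distTriang T) {Z : T} (hR : ∀ x : Z ⟶ R⟦(1 : ℤ)⟧, x = 0)
    (a b : Z ⟶ X⟦(1 : ℤ)⟧) (hab : a ≫ q⟦(1 : ℤ)⟧' = b ≫ q⟦(1 : ℤ)⟧') : a = b := by
  have h₁ : Triangle.mk h (-f⟦(1 : ℤ)⟧') (-q⟦(1 : ℤ)⟧') ∈ distTriang T :=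
    rot_of_distTriang _ (rot_of_distTriang _ hT)
  obtain ⟨x, hx⟩ := coyoneda₃ h₁ (a - b) (by
    rw [Preadditive.comp_neg, Preadditive.sub_comp, hab, sub_self, neg_zero])
  rw [hR x, zero_comp, sub_eq_zero] at hx
  exact hx

/-- The connecting morphism `t` is compatible with `θX` as soon as its composition with
`X⟦1⟧ ⟶ S⟦1⟧` is compatible with `φS`. -/
lemma square_shift [F.CommShift ℤ] {f : R ⟶ X} {q : X ⟶ S} {h : S ⟶ R⟦(1 : ℤ)⟧}
    (hT : Triangle.mk f q h ∈ distTriang T) {Z : T} (hR : ∀ x : Z ⟶ R⟦(1 : ℤ)⟧, x = 0)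
    (φZ : F.obj Z ≅ Z) (θX : F.obj X ≅ X) (φS : F.obj S ≅ S)
    (hq : F.map q ≫ φS.hom = θX.hom ≫ q) (t : Z ⟶ X⟦(1 : ℤ)⟧)
    (ht : F.map (t ≫ q⟦(1 : ℤ)⟧') ≫ (F.commShiftIso (1 : ℤ)).hom.app S ≫ φS.hom⟦(1 : ℤ)⟧' =
      φZ.hom ≫ t ≫ q⟦(1 : ℤ)⟧') :
    F.map t ≫ (F.commShiftIso (1 : ℤ)).hom.app X ≫ θX.hom⟦(1 : ℤ)⟧' = φZ.hom ≫ t := by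
  refine square_right hT (fun x => ?_) _ _ ?_
  · rw [← cancel_epi φZ.inv, comp_zero]
    exact hR _
  · have e : θX.hom⟦(1 : ℤ)⟧' ≫ q⟦(1 : ℤ)⟧' = (F.map q)⟦(1 : ℤ)⟧' ≫ φS.hom⟦(1 : ℤ)⟧' := by
      rw [← (shiftFunctor T (1 : ℤ)).map_comp, ← hq, (shiftFunctor T (1 : ℤ)).map_comp]
    rw [assoc, assoc, assoc, e, ← ht, F.map_comp, assoc, F.commShiftIso_hom_naturality_assoc]

end Squares

section Theta

variable {A}
variable {F : HomotopyCategory A (ComplexShape.up ℤ) ⥤ HomotopyCategory A (ComplexShape.up ℤ)}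
  [F.CommShift ℤ] [F.IsTriangulated]

/-- Compatible isomorphisms on the truncations of `K` to the intervals `[b, b + n]`. -/
lemma exists_theta_icc (Φ : StalkIsos F) (K : CochainComplex A ℤ) (b : ℤ) :
    ∃ θ : ∀ n : ℕ, F.obj (Q.obj (sub K (fun i => b ≤ i ∧ i ≤ b + n))) ≅
        Q.obj (sub K (fun i => b ≤ i ∧ i ≤ b + n)),
      θ 0 = Φ.φ b _ ((Sup.sub K (fun i => b ≤ i ∧ i ≤ b + (0 : ℕ))).mono
        (fun i hi => by push_cast at hi; omega)) ∧
      ∀ n, F.map (Q.map (tr K (fun i => b ≤ i ∧ i ≤ b + (n + 1 : ℕ)) (fun i => b ≤ i ∧ i ≤ b + n)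
        (fun i _ _ => by push_cast; omega))) ≫ (θ n).hom =
          (θ (n + 1)).hom ≫ Q.map (tr K _ _ (fun i _ _ => by push_cast; omega)) := by
  refine exists_seq
    (α := fun n => F.obj (Q.obj (sub K (fun i => b ≤ i ∧ i ≤ b + n))) ≅
        Q.obj (sub K (fun i => b ≤ i ∧ i ≤ b + n)))
    (P := fun n θ => F.map (Q.map (tr K (fun i => i = b + n) (fun i => b ≤ i ∧ i ≤ b + n)
      (fun i _ _ => by omega))) ≫ θ.hom = (Φ.φ (b + n) _ (Sup.sub K _)).hom ≫
        Q.map (tr K _ _ (fun i _ _ => by omega)))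
    (R := fun n θ θ' => F.map (Q.map (tr K (fun i => b ≤ i ∧ i ≤ b + (n + 1 : ℕ))
      (fun i => b ≤ i ∧ i ≤ b + n) (fun i _ _ => by push_cast; omega))) ≫ θ.hom =
          θ'.hom ≫ Q.map (tr K _ _ (fun i _ _ => by push_cast; omega)))
    _ ?_ ?_
  · have : b + (0 : ℕ) = b := by simp
    have h : ∀ (n : ℤ) (hn : n = b) h, Φ.φ n (Q.obj (sub K fun i => i = b + (0 : ℕ))) h =
        Φ.φ b _ (hn ▸ h) := by
      rintro _ rfl h; rfl
    rw [h _ this]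
    exact Φ.nat _ _ _ _ _ _
  · intro n θ hθ
    obtain ⟨t, ht⟩ := exists_trunc_triangle K (p := fun i => b ≤ i ∧ i ≤ b + (n + 1 : ℕ))
      (q := fun i => i = b + (n + 1 : ℕ)) (r := fun i => b ≤ i ∧ i ≤ b + n)
      (fun i _ _ => by push_cast at *; omega) (fun i _ _ => by push_cast at *; omega)
      (fun i => by push_cast; omega) (fun i => by push_cast; omega)
    obtain ⟨t', ht'⟩ := exists_trunc_triangle K (p := fun i => b ≤ i ∧ i ≤ b + n)
      (q := fun i => i = b + n) (r := fun i => b ≤ i ∧ i < b + n)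
      (fun i _ _ => by omega) (fun i _ _ => by omega)
      (fun i => by omega) (fun i => by omega)
    obtain ⟨θ', h₁, h₂⟩ := exists_iso₂ (F := F) ht (Φ.φ (b + (n + 1 : ℕ)) _ (Sup.sub K _)) θ (by
      refine square_left ht' ?_ (Φ.φ (b + n) _ (Sup.sub K _)) θ hθ _ _ ?_
      · exact (Sup.sub K _).eq_zero ((Sup.sub K _).shift 1) (fun i h => by push_cast; omega)
      · rw [← Φ.nat_shift (b + n) (b + (n + 1 : ℕ)) _ _ (Sup.sub K _) (Sup.sub K _)
          (by push_cast; omega), F.map_comp, assoc])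
    exact ⟨θ', h₁, h₂⟩

/-- An isomorphism on the truncation of `K` to the degrees `≥ b`, obtained as a homotopy limit. -/
lemma exists_theta_ge [HasProductsOfShape ℕ A] [PreservesLimitsOfShape (Discrete ℕ) F]
    (Φ : StalkIsos F) (K : CochainComplex A ℤ) (b : ℤ) :
    ∃ θ : F.obj (Q.obj (sub K (fun i => b ≤ i))) ≅ Q.obj (sub K (fun i => b ≤ i)),
      F.map (Q.map (tr K (fun i => b ≤ i) (fun i => i = b) (fun i _ _ => by omega))) ≫
        (Φ.φ b _ (Sup.sub K _)).hom = θ.hom ≫ Q.map (tr K _ _ (fun i _ _ => by omega)) := by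
  obtain ⟨θ, h₀, hθ⟩ := exists_theta_icc Φ K b
  obtain ⟨t, ht⟩ := exists_holim_triangle K (P := fun i => b ≤ i)
    (p := fun n i => b ≤ i ∧ i ≤ b + n) (fun n i h => by push_cast; omega)
    (fun i hi => ⟨(i - b).toNat, by omega⟩) (fun n i _ _ => by push_cast at *; omega)
    (fun n i _ _ => by omega) (fun n i h => h.1)
  have hlim := isLimitProd (fun n : ℕ => sub K (fun i => b ≤ i ∧ i ≤ b + n))
  obtain ⟨Θ, hΘ⟩ := exists_iso_prod (F := F) hlim θ
  obtain ⟨θ', hθ'⟩ := exists_iso₁ (F := F) ht Θ Θ (by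
    refine Fan.IsLimit.hom_ext hlim _ _ fun n => ?_
    change (_ ≫ _) ≫ Q.map (outC _ n) = (_ ≫ _) ≫ Q.map (outC _ n)
    rw [assoc, assoc, ← hΘ n, ← F.map_comp_assoc, ← Q.map_comp, liftC_outC, Q.map_sub, F.map_sub,
      Q.map_comp, F.map_comp, Preadditive.sub_comp, Preadditive.comp_sub, hΘ n, assoc, hθ n,
      reassoc_of% (hΘ (n + 1))])
  refine ⟨θ', ?_⟩
  have e : tr K (fun i => b ≤ i) (fun i => i = b) (fun i _ _ => by omega) =
      (liftC (fun n : ℕ => tr K (fun i => b ≤ i) (fun i => b ≤ i ∧ i ≤ b + n)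
        (fun i _ _ => by omega)) ≫ outC _ 0) ≫
        tr K _ (fun i => i = b) (fun i _ _ => by push_cast; omega) := by
    rw [liftC_outC, tr_comp]
    intro i _ _
    push_cast
    omega
  rw [e, Q.map_comp, Q.map_comp, F.map_comp, F.map_comp, assoc, assoc, Φ.nat b _ _
    ((Sup.sub K _).mono (fun i hi => by push_cast at hi; omega)) (Sup.sub K _), ← h₀,
    reassoc_of% (hΘ 0), reassoc_of% hθ', assoc]

/-- Compatible isomorphisms on the truncations of `K` to the degrees `≥ -n`. -/
lemma exists_theta_seq [HasProductsOfShape ℕ A] [PreservesLimitsOfShape (Discrete ℕ) F]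
    (Φ : StalkIsos F) (K : CochainComplex A ℤ) :
    ∃ θ : ∀ n : ℕ, F.obj (Q.obj (sub K (fun i => -(n : ℤ) ≤ i))) ≅
        Q.obj (sub K (fun i => -(n : ℤ) ≤ i)),
      ∀ n : ℕ, F.map (Q.map (tr K (fun i => -(n : ℤ) ≤ i) (fun i => -((n + 1 : ℕ) : ℤ) ≤ i)
        (fun i _ _ => by push_cast; omega))) ≫ (θ (n + 1)).hom =
          (θ n).hom ≫ Q.map (tr K _ _ (fun i _ _ => by push_cast; omega)) := by
  obtain ⟨θ₀, hθ₀⟩ := exists_theta_ge Φ K (-((0 : ℕ) : ℤ))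
  have := exists_seq
    (α := fun n : ℕ => F.obj (Q.obj (sub K (fun i => -(n : ℤ) ≤ i))) ≅
        Q.obj (sub K (fun i => -(n : ℤ) ≤ i)))
    (P := fun n θ => F.map (Q.map (tr K (fun i => -(n : ℤ) ≤ i) (fun i => i = -(n : ℤ))
      (fun i _ _ => by omega))) ≫ (Φ.φ (-(n : ℤ)) _ (Sup.sub K _)).hom =
        θ.hom ≫ Q.map (tr K _ _ (fun i _ _ => by omega)))
    (R := fun n θ θ' => F.map (Q.map (tr K (fun i => -(n : ℤ) ≤ i)
      (fun i => -((n + 1 : ℕ) : ℤ) ≤ i) (fun i _ _ => by push_cast; omega))) ≫ θ'.hom =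
          θ.hom ≫ Q.map (tr K _ _ (fun i _ _ => by push_cast; omega)))
    θ₀ hθ₀ ?_
  · obtain ⟨θ, -, h⟩ := this
    exact ⟨θ, h⟩
  · intro n θ hθ
    obtain ⟨t, ht⟩ := exists_trunc_triangle K (p := fun i => -((n + 1 : ℕ) : ℤ) ≤ i)
      (q := fun i => -(n : ℤ) ≤ i) (r := fun i => i = -((n + 1 : ℕ) : ℤ))
      (fun i _ _ => by push_cast at *; omega) (fun i _ _ => by push_cast at *; omega)
      (fun i => by push_cast; omega) (fun i => by push_cast; omega)
    obtain ⟨t', ht'⟩ := exists_trunc_triangle K (p := fun i => -(n : ℤ) ≤ i)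
      (q := fun i => -(n : ℤ) < i) (r := fun i => i = -(n : ℤ))
      (fun i _ _ => by omega) (fun i _ _ => by omega)
      (fun i => by omega) (fun i => by omega)
    obtain ⟨θ', h₁, h₂⟩ := exists_iso₂ (F := F) ht θ
        (Φ.φ (-((n + 1 : ℕ) : ℤ)) _ (Sup.sub K _)) (by
      refine square_shift ht' ?_ _ θ (Φ.φ (-(n : ℤ)) _ (Sup.sub K _)) hθ t ?_
      · exact (Sup.sub K _).eq_zero ((Sup.sub K _).shift 1) (fun i h => by push_cast at h; omega)
      · exact Φ.nat_shift (-((n + 1 : ℕ) : ℤ)) (-(n : ℤ)) _ _ (Sup.sub K _) (Sup.sub K _)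
          (by push_cast; omega) _)
    exact ⟨θ', h₂, h₁⟩

/-- `F` fixes every object up to isomorphism: a complex is the homotopy colimit of its
truncations to the degrees `≥ -n`. -/
lemma exists_theta [HasProductsOfShape ℕ A] [PreservesLimitsOfShape (Discrete ℕ) F]
    [HasCoproductsOfShape ℕ A] [PreservesColimitsOfShape (Discrete ℕ) F]
    (Φ : StalkIsos F) (X : HomotopyCategory A (ComplexShape.up ℤ)) : Nonempty (F.obj X ≅ X) := by
  obtain ⟨K, rfl⟩ : ∃ K : CochainComplex A ℤ, Q.obj K = X := ⟨X.as, rfl⟩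
  obtain ⟨θ, hθ⟩ := exists_theta_seq Φ K
  obtain ⟨t, ht⟩ := exists_hocolim_triangle K (P := fun _ => True)
    (p := fun (n : ℕ) i => -(n : ℤ) ≤ i) (fun n i h => by push_cast; omega)
    (fun i hi => ⟨(-i).toNat, by omega⟩) (fun n i _ _ => by push_cast at *; omega)
    (fun n i _ _ => by simp; omega) (fun n i h => trivial)
  have hcolim := isColimitCoprod (fun n : ℕ => sub K (fun i => -(n : ℤ) ≤ i))
  obtain ⟨Θ, hΘ⟩ := exists_iso_coprod (F := F) hcolim θ
  obtain ⟨θ', -⟩ := exists_iso₃ (F := F) ht Θ Θ (by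
    refine Cofan.IsColimit.hom_ext (isColimitCofanMkObjOfIsColimit F _ _ hcolim) _ _ fun n => ?_
    change F.map (Q.map (inC _ n)) ≫ _ = F.map (Q.map (inC _ n)) ≫ _
    have e := congrArg Q.map (inC_descC (fun n : ℕ => inC (fun n : ℕ =>
      sub K (fun i => -(n : ℤ) ≤ i)) n - tr K (fun i => -(n : ℤ) ≤ i)
        (fun i => -((n + 1 : ℕ) : ℤ) ≤ i) (fun i _ _ => by push_cast; omega) ≫
          inC (fun n : ℕ => sub K (fun i => -(n : ℤ) ≤ i)) (n + 1)) n)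
    rw [Q.map_comp, Q.map_sub, Q.map_comp] at e
    rw [← F.map_comp_assoc, e, F.map_sub, Preadditive.sub_comp, F.map_comp, assoc, hΘ n,
      hΘ (n + 1), reassoc_of% (hθ n), reassoc_of% (hΘ n), e, Preadditive.comp_sub])
  let e : Q.obj (sub K (fun _ => True)) ≅ Q.obj K := Q.mapIso (subTop K (fun _ => trivial))
  exact ⟨F.mapIso e.symm ≪≫ θ' ≪≫ e⟩

end Theta

/-! ### Full faithfulness -/

/-- Replacing the middle object of a distinguished triangle by an isomorphic one. -/
lemma dist_of_iso₂ {X₁ X₂ X₃ X₂' : T} {f : X₁ ⟶ X₂} {g : X₂ ⟶ X₃} {h : X₃ ⟶ X₁⟦(1 : ℤ)⟧}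
    (hT : Triangle.mk f g h ∈ distTriang T) (e : X₂ ≅ X₂') :
    Triangle.mk (f ≫ e.hom) (e.inv ≫ g) h ∈ distTriang T :=
  isomorphic_distinguished _ hT _ (Triangle.isoMk _ _ (Iso.refl _) e.symm (Iso.refl _)
    (show (f ≫ e.hom) ≫ e.inv = 𝟙 _ ≫ f by simp) (show (e.inv ≫ g) ≫ 𝟙 _ = e.inv ≫ g by simp)
    (show h ≫ (𝟙 X₁)⟦(1 : ℤ)⟧' = 𝟙 X₃ ≫ h by simp))

section FullyFaithful

variable {A}

lemma Sup.all (X : HomotopyCategory A (ComplexShape.up ℤ)) : Sup (fun _ => True) X :=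
  ⟨X.as, fun _ h => absurd trivial h, ⟨Iso.refl _⟩⟩

/-- The brutal truncation triangle at degree `c` of an object supported in `s`. -/
lemma exists_cut {s : ℤ → Prop} {X : HomotopyCategory A (ComplexShape.up ℤ)} (hX : Sup s X)
    (c : ℤ) : ∃ (X₁ X₃ : HomotopyCategory A (ComplexShape.up ℤ)) (f : X₁ ⟶ X) (g : X ⟶ X₃)
      (h : X₃ ⟶ X₁⟦(1 : ℤ)⟧), Triangle.mk f g h ∈ distTriang _ ∧
      Sup (fun i => s i ∧ c ≤ i) X₁ ∧ Sup (fun i => s i ∧ i < c) X₃ := by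
  obtain ⟨K, hK, ⟨e⟩⟩ := hX
  obtain ⟨t, ht⟩ := exists_trunc_triangle K (p := fun _ => True) (q := fun i => c ≤ i)
    (r := fun i => i < c) (fun i _ _ => by simp; omega) (fun i _ _ => by simp; omega)
    (fun i => by simp; omega) (fun i => by omega)
  have hsub : ∀ p : ℤ → Prop, Sup (fun i => s i ∧ p i) (Q.obj (sub K p)) := fun p =>
    ⟨sub K p, fun n hn => by
      by_cases hp : p n
      · have hs : IsZero (K.X n) := hK n (fun h => hn ⟨h, hp⟩)
        rw [IsZero.iff_id_eq_zero, ← ι_π K p n, hs.eq_of_tgt (ι K p n) 0, zero_comp]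
      · exact isZero_sub K p n hp, ⟨Iso.refl _⟩⟩
  let e' : Q.obj (sub K (fun _ => True)) ≅ X :=
    Q.mapIso (subTop K (fun _ => trivial)) ≪≫ e.symm
  exact ⟨_, _, _, _, _, dist_of_iso₂ ht e', hsub _, hsub _⟩

variable {F : HomotopyCategory A (ComplexShape.up ℤ) ⥤ HomotopyCategory A (ComplexShape.up ℤ)}
  [F.CommShift ℤ] [F.IsTriangulated]

lemma bij_disjoint (θ : ∀ X, Nonempty (F.obj X ≅ X)) {s t : ℤ → Prop}
    {X Y : HomotopyCategory A (ComplexShape.up ℤ)} (hX : Sup s X) (hY : Sup t Y)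
    (h : ∀ i, s i → ¬ t i) : Bij F X Y :=
  Bij.of_unique (θ X).some (θ Y).some (hX.eq_zero hY h)

lemma bij_stalk (Φ : StalkIsos F) (θ : ∀ X, Nonempty (F.obj X ≅ X)) {n m : ℤ}
    {X Y : HomotopyCategory A (ComplexShape.up ℤ)} (hX : Sup (fun i => i = n) X)
    (hY : Sup (fun i => i = m) Y) : Bij F X Y := by
  by_cases hnm : n = m
  · subst hnm
    exact Bij.of_natural (Φ.φ n X hX) (Φ.φ n Y hY) (Φ.nat n X Y hX hY)
  · exact bij_disjoint θ hX hY (fun i h h' => hnm (h.symm.trans h'))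

lemma bij_bounded_stalk (Φ : StalkIsos F) (θ : ∀ X, Nonempty (F.obj X ≅ X)) {m : ℤ}
    {Y : HomotopyCategory A (ComplexShape.up ℤ)} (hY : Sup (fun i => i = m) Y) (n : ℕ) :
    ∀ (b : ℤ) {X : HomotopyCategory A (ComplexShape.up ℤ)},
      Sup (fun i => b ≤ i ∧ i < b + n) X → Bij F X Y := by
  induction n with
  | zero => exact fun b X hX => bij_disjoint θ hX hY (fun i hi => by push_cast at hi; omega)
  | succ n ih =>
    intro b X hX
    obtain ⟨X₁, X₃, f, g, h, hT, h₁, h₃⟩ := exists_cut hX (b + 1)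
    push_cast at h₁ h₃
    exact Bij.tri_left hT (ih (b + 1) (h₁.mono (fun i hi => by omega)))
      (bij_stalk Φ θ (h₃.mono (t := fun i => i = b) (fun i hi => by omega)) hY)
      (ih b ((h₁.shift 1).mono (fun i hi => by omega)))
      (bij_stalk Φ θ ((h₃.shift (-1)).mono (t := fun i => i = b + 1) (fun i hi => by omega)) hY)

lemma bij_bounded (Φ : StalkIsos F) (θ : ∀ X, Nonempty (F.obj X ≅ X)) {a : ℤ} {m : ℕ}
    {X : HomotopyCategory A (ComplexShape.up ℤ)} (hX : Sup (fun i => a ≤ i ∧ i < a + m) X)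
    (n : ℕ) : ∀ (b : ℤ) {Y : HomotopyCategory A (ComplexShape.up ℤ)},
      Sup (fun i => b ≤ i ∧ i < b + n) Y → Bij F X Y := by
  induction n with
  | zero => exact fun b Y hY => bij_disjoint θ hX hY (fun i _ hi => by push_cast at hi; omega)
  | succ n ih =>
    intro b Y hY
    obtain ⟨Y₁, Y₃, f, g, h, hT, h₁, h₃⟩ := exists_cut hY (b + 1)
    push_cast at h₁ h₃
    exact Bij.tri_right hT (ih (b + 1) (h₁.mono (fun i hi => by omega)))
      (bij_bounded_stalk Φ θ (h₃.mono (t := fun i => i = b) (fun i hi => by omega)) m a hX)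
      (ih b ((h₁.shift 1).mono (fun i hi => by omega)))
      (bij_bounded_stalk Φ θ ((h₃.shift (-1)).mono (t := fun i => i = b + 1)
        (fun i hi => by omega)) m a hX)

lemma bij_bounded_minus (Φ : StalkIsos F) (θ : ∀ X, Nonempty (F.obj X ≅ X)) {a b c : ℤ}
    {X Y : HomotopyCategory A (ComplexShape.up ℤ)} (hX : Sup (fun i => a ≤ i ∧ i < b) X)
    (hY : Sup (fun i => i < c) Y) : Bij F X Y := by
  have hX' : Sup (fun i => a ≤ i ∧ i < a + (b - a).toNat) X := hX.mono (fun i hi => by omega)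
  -- Both `Y₃` and `Y₃⟦-1⟧` live in degrees smaller than `a`.
  obtain ⟨Y₁, Y₃, f, g, h, hT, h₁, h₃⟩ := exists_cut hY (a - 1)
  exact Bij.tri_right hT
    (bij_bounded Φ θ hX' (c - (a - 2)).toNat (a - 2) (h₁.mono (fun i hi => by omega)))
    (bij_disjoint θ hX h₃ (fun i hi => by omega))
    (bij_bounded Φ θ hX' (c - (a - 2)).toNat (a - 2) ((h₁.shift 1).mono (fun i hi => by omega)))
    (bij_disjoint θ hX (h₃.shift (-1)) (fun i hi => by omega))

lemma bij_plus_minus (Φ : StalkIsos F) (θ : ∀ X, Nonempty (F.obj X ≅ X)) {a c : ℤ}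
    {X Y : HomotopyCategory A (ComplexShape.up ℤ)} (hX : Sup (fun i => a ≤ i) X)
    (hY : Sup (fun i => i < c) Y) : Bij F X Y := by
  -- Both `X₁` and `X₁⟦1⟧` live in degrees at least `c`.
  obtain ⟨X₁, X₃, f, g, h, hT, h₁, h₃⟩ := exists_cut hX (c + 1)
  exact Bij.tri_left hT
    (bij_disjoint θ h₁ hY (fun i hi => by omega))
    (bij_bounded_minus Φ θ h₃ hY)
    (bij_disjoint θ (h₁.shift 1) hY (fun i hi => by omega))
    (bij_bounded_minus Φ θ (a := a) (b := c + 2) ((h₃.shift (-1)).mono (fun i hi => by omega)) hY)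

/-- Every complex is the homotopy limit of its truncations to the degrees `≤ n`, so the target
may be arbitrary. -/
lemma bij_plus [HasProductsOfShape ℕ A] [PreservesLimitsOfShape (Discrete ℕ) F]
    (Φ : StalkIsos F) (θ : ∀ X, Nonempty (F.obj X ≅ X)) {a : ℤ}
    {X : HomotopyCategory A (ComplexShape.up ℤ)} (hX : Sup (fun i => a ≤ i) X)
    (Y : HomotopyCategory A (ComplexShape.up ℤ)) : Bij F X Y := by
  obtain ⟨K, rfl⟩ : ∃ K : CochainComplex A ℤ, Q.obj K = Y := ⟨Y.as, rfl⟩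
  obtain ⟨t, ht⟩ := exists_holim_triangle K (P := fun _ => True)
    (p := fun (n : ℕ) i => i < n) (fun n i h => by push_cast; omega)
    (fun i hi => ⟨(i + 1).toNat, by omega⟩) (fun n i _ _ => by push_cast at *; omega)
    (fun n i _ _ => by simp; omega) (fun n i h => trivial)
  have hprod : ∀ {b : ℤ} {X' : HomotopyCategory A (ComplexShape.up ℤ)},
      Sup (fun i => b ≤ i) X' → Bij F X' (Q.obj (prodC (fun n : ℕ => sub K (fun i => i < n)))) :=
    fun hX' => Bij.prod (isLimitProd _) (fun n => bij_plus_minus Φ θ hX' (Sup.sub K _))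
  have hprod' := Bij.shift_right (F := F) (1 : ℤ) (-1) (by omega)
    (hprod (b := a - 1) ((hX.shift 1).mono (fun i hi => by omega)))
  obtain ⟨m, k, hT⟩ := exists_invRotate ht
  exact (Bij.tri_right hT hprod' (hprod hX)
    ((hprod hX).of_iso (Iso.refl _) ((shiftFunctorCompIsoId _ (-1 : ℤ) 1 (by omega)).app _).symm)
    hprod').of_iso (Iso.refl _) (Q.mapIso (subTop K (fun _ => trivial)))

/-- Every complex is the homotopy colimit of its truncations to the degrees `≥ -n`, so the
source may be arbitrary. -/
lemma bij_all [HasProductsOfShape ℕ A] [PreservesLimitsOfShape (Discrete ℕ) F]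
    [HasCoproductsOfShape ℕ A] [PreservesColimitsOfShape (Discrete ℕ) F]
    (Φ : StalkIsos F) (θ : ∀ X, Nonempty (F.obj X ≅ X))
    (X Y : HomotopyCategory A (ComplexShape.up ℤ)) : Bij F X Y := by
  obtain ⟨K, rfl⟩ : ∃ K : CochainComplex A ℤ, Q.obj K = X := ⟨X.as, rfl⟩
  obtain ⟨t, ht⟩ := exists_hocolim_triangle K (P := fun _ => True)
    (p := fun (n : ℕ) i => -(n : ℤ) ≤ i) (fun n i h => by push_cast; omega)
    (fun i hi => ⟨(-i).toNat, by omega⟩) (fun n i _ _ => by push_cast at *; omega)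
    (fun n i _ _ => by simp; omega) (fun n i h => trivial)
  have hcoprod : ∀ Y' : HomotopyCategory A (ComplexShape.up ℤ),
      Bij F (Q.obj (coprodC (fun n : ℕ => sub K (fun i => -(n : ℤ) ≤ i)))) Y' :=
    fun Y' => Bij.coprod (isColimitCoprod _) (fun n => bij_plus Φ θ (Sup.sub K _) Y')
  have hT := rot_of_distTriang _ ht
  have hcoprod' := Bij.shift_left (F := F) (-1 : ℤ) 1 (by omega) (hcoprod (Y⟦(-1 : ℤ)⟧))
  exact (Bij.tri_left hT (hcoprod Y) hcoprod' hcoprod'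
    ((hcoprod Y).of_iso ((shiftFunctorCompIsoId _ (1 : ℤ) (-1) (by omega)).app _).symm
      (Iso.refl _))).of_iso (Q.mapIso (subTop K (fun _ => trivial))) (Iso.refl _)

end FullyFaithful

end PseudoIdentity

/-- Proposition 6.3: let `A` be an additive category with arbitrary
coproducts and products, and `F : K(A) → K(A)` a bi-continuous triangle endofunctor
sending each object of `A` (viewed as a stalk complex in degree zero) into `A` and whose
restriction to `A` is isomorphic to the identity functor.  Then `F` is isomorphic, as a
triangle functor, to a pseudo-identity on `K(A)` with respect to the canonical
pre-weight structure. -/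
theorem homotopyCategory_isoPseudoIdentity
    [HasCoproducts.{v₂} A] [HasProducts.{v₂} A]
    (F : HomotopyCategory A (ComplexShape.up ℤ) ⥤ HomotopyCategory A (ComplexShape.up ℤ))
    [F.CommShift ℤ] [F.IsTriangulated]
    [∀ J : Type v₂, PreservesColimitsOfShape (Discrete J) F]
    [∀ J : Type v₂, PreservesLimitsOfShape (Discrete J) F]
    (hobj : ∀ M : A, ∃ N : A, Nonempty (F.obj ((stalkK A).obj M) ≅ (stalkK A).obj N))
    (hres : Nonempty (stalkK A ⋙ F ≅ stalkK A)) :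
    ∃ (G : HomotopyCategory A (ComplexShape.up ℤ) ⥤ HomotopyCategory A (ComplexShape.up ℤ))
      (csG : G.CommShift ℤ) (e : F ≅ G),
      letI : G.CommShift ℤ := csG
      G.IsTriangulated ∧ IsPseudoIdentity (Kge A) (Kle A) G ∧
        NatTrans.CommShift e.hom ℤ := by
  obtain ⟨E⟩ := hres
  -- Coproducts and products indexed by `ℕ`, from those indexed by `ULift ℕ : Type v₂`.
  have : HasCoproductsOfShape ℕ A :=
    hasColimitsOfShape_of_equivalence (Discrete.equivalence (Equiv.ulift.{v₂} (α := ℕ)))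
  have : HasProductsOfShape ℕ A :=
    hasLimitsOfShape_of_equivalence (Discrete.equivalence (Equiv.ulift.{v₂} (α := ℕ)))
  have : PreservesColimitsOfShape (Discrete ℕ) F :=
    preservesColimitsOfShape_of_equiv (Discrete.equivalence (Equiv.ulift.{v₂} (α := ℕ))) F
  have : PreservesLimitsOfShape (Discrete ℕ) F :=
    preservesLimitsOfShape_of_equiv (Discrete.equivalence (Equiv.ulift.{v₂} (α := ℕ))) F
  obtain ⟨Φ⟩ := PseudoIdentity.nonempty_stalkIsos E
  have θ := PseudoIdentity.exists_theta Φ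
  obtain ⟨ψ, hψ⟩ := PseudoIdentity.exists_core_iso E
  have hFaithful : F.Faithful := ⟨fun {X Y} f g h => (PseudoIdentity.bij_all Φ θ X Y).1 h⟩
  have hFull : F.Full := ⟨fun {X Y} f => (PseudoIdentity.bij_all Φ θ X Y).2 f⟩
  have hEssSurj : F.EssSurj := ⟨fun X => ⟨X, θ X⟩⟩
  have hEquiv : F.IsEquivalence := { }
  classical
  -- Natural isomorphisms on the core, arbitrary ones elsewhere; `F` is conjugated by them.
  let e : ∀ X, F.obj X ≅ X := fun X =>
    if hX : X ∈ coreSet (Kge A) (Kle A) then ψ X hX else (θ X).some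
  have he : ∀ X (hX : X ∈ coreSet (Kge A) (Kle A)), e X = ψ X hX := fun X hX => dif_pos hX
  let G := F.copyObj (fun X => X) e
  let i : F ≅ G := F.isoCopyObj (fun X => X) e
  letI csG : G.CommShift ℤ := Functor.CommShift.ofIso i ℤ
  have : NatTrans.CommShift i.hom ℤ := Functor.CommShift.ofIso_compatibility i ℤ
  refine ⟨G, csG, i, Functor.isTriangulated_of_iso i,
    ⟨Functor.isEquivalence_of_iso i, fun _ => rfl, fun X Y hX hY f => ?_⟩, inferInstance⟩
  change (e X).inv ≫ F.map f ≫ (e Y).hom = 𝟙 X ≫ f ≫ 𝟙 Y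
  rw [he X hX, he Y hY, hψ X Y hX hY f, Iso.inv_hom_id_assoc, id_comp, comp_id]
end
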